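/- arXiv:1203.2823 — 6 statements merged into one kernel-verified Lean document; each statement's English description precedes it below -/
import Mathlib

section
/- For every positive integer n, the 3-adic valuation of the sum ∑_{k=0}^{n-1} C(2k,k) equals 2·ν₃(n) + ν₃(C(2n,n)). -/
/-!
Put `H(m) = ∑ₖ C(m,k) 3ᵏ / (2k+1) = ∫₀¹ (1 + 3t²)ᵐ dt`. Integration by parts gives a recurrence in
`m` which telescopes to `2 · 4ᵐ · ∑_{k ≤ m} C(2k,k) = n · C(2n,n) · H(m)` with `n = m + 1`, so it
remains to see that `H(m)` and `n` have the same `3`-adic norm.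

Since `C(n-1,k)` is `3`-adically close to `C(-1,k) = (-1)ᵏ`, with an error divisible by `n` up to a
denominator of logarithmic size, replacing one by the other in `H(m)` costs `n` (the term `k = 1`)
plus a multiple of `3n`. What is left is a partial sum of `∑ₖ (-3)ᵏ / (2k+1)`, formally
`log ((1 + √-3) / (1 - √-3)) / (2√-3)`, the logarithm of a cube root of unity. Accordingly it tends
to `0`; quantitatively, `(1 + √-3)³ = -8` makes the imaginary part of `(1 + √-3)³ⁿ` vanish, and the
same approximation, now of `C(3n-1,2k)` by `1`, shows that the partial sum is divisible by `3n`.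
-/

open Finset Nat

section BinomialMoment

variable {K : Type*} [Field K]

/-- The moment `∫₀¹ (1 + x t²)ᵐ dt`, expanded by the binomial theorem so that it makes sense over
any field of characteristic zero. -/
def binomialMoment (x : K) (m : ℕ) : K :=
  ∑ k ∈ range (m + 1), x ^ k / (2 * k + 1) * m.choose k

theorem binomialMoment_eq_sum_range (x : K) {m M : ℕ} (h : m < M) :
    binomialMoment x m = ∑ k ∈ range M, x ^ k / (2 * k + 1) * m.choose k := by
  refine sum_subset (range_subset_range.2 h) fun k _ hk => ?_
  rw [choose_eq_zero_of_lt (by simpa using hk), cast_zero, mul_zero]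

variable [CharZero K]

theorem two_mul_natCast_add_one_ne_zero (k : ℕ) : (2 * k + 1 : K) ≠ 0 := by
  exact_mod_cast (2 * k).succ_ne_zero

theorem binomialMoment_succ (x : K) (m : ℕ) :
    (2 * m + 3) * binomialMoment x (m + 1) =
      2 * (m + 1) * binomialMoment x m + (1 + x) ^ (m + 1) := by
  rw [binomialMoment_eq_sum_range x (Nat.lt_add_of_pos_right two_pos : m < m + 2), binomialMoment,
    add_comm 1 x, add_pow, mul_sum, mul_sum, ← sum_add_distrib]
  refine sum_congr rfl fun k hk => ?_
  have hchoose : (m.choose k * (m + 1) : K) = (m + 1).choose k * (m + 1 - k) := by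
    have := congrArg (Nat.cast : ℕ → K) (choose_mul_succ_eq m k)
    push_cast [cast_sub (mem_range_succ_iff.1 hk)] at this
    exact this
  have := two_mul_natCast_add_one_ne_zero (K := K) k
  rw [one_pow, mul_one]
  field_simp
  linear_combination (-2) * x ^ k * hchoose

theorem two_mul_four_pow_mul_sum_centralBinom (x : K) (m : ℕ) :
    2 * 4 ^ m * ∑ k ∈ range (m + 1), (centralBinom k : K) * ((1 + x) / 4) ^ k =
      (m + 1) * centralBinom (m + 1) * binomialMoment x m := by
  induction m with
  | zero => simp [binomialMoment, centralBinom]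
  | succ m ih =>
    have hbinom : ((m + 2) * centralBinom (m + 2) : K) =
        2 * (2 * m + 3) * centralBinom (m + 1) := by
      have := congrArg (Nat.cast : ℕ → K) (succ_mul_centralBinom_succ (m + 1))
      push_cast at this
      linear_combination this
    have hpow : (4 : K) ^ (m + 1) * ((1 + x) / 4) ^ (m + 1) = (1 + x) ^ (m + 1) := by
      rw [← mul_pow, mul_div_cancel₀ _ (by norm_num)]
    rw [sum_range_succ]
    push_cast
    linear_combination 4 * ih - binomialMoment x (m + 1) * hbinom
      - 2 * centralBinom (m + 1) * binomialMoment_succ x m + 2 * centralBinom (m + 1) * hpow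

end BinomialMoment

theorem one_add_pow_eq_sum_even_add_sum_odd {R : Type*} [CommSemiring R] (s : R) {N M : ℕ}
    (h : N < 2 * M) :
    (1 + s) ^ N = ∑ k ∈ range M, N.choose (2 * k) * (s ^ 2) ^ k +
      s * ∑ k ∈ range M, N.choose (2 * k + 1) * (s ^ 2) ^ k := by
  have hsplit : ∀ L, ∑ j ∈ range (2 * L), N.choose j * s ^ j =
      ∑ k ∈ range L, N.choose (2 * k) * (s ^ 2) ^ k +
        s * ∑ k ∈ range L, N.choose (2 * k + 1) * (s ^ 2) ^ k := by
    intro L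
    induction L with
    | zero => simp
    | succ L ih =>
      rw [mul_add_one, sum_range_succ, sum_range_succ, ih, sum_range_succ, sum_range_succ]
      ring
  rw [← hsplit, add_comm 1 s, add_pow]
  simp only [one_pow, mul_one, mul_comm (_ ^ _) (Nat.cast _)]
  refine sum_subset (range_subset_range.2 h) fun j _ hj => ?_
  rw [choose_eq_zero_of_lt (by simpa using hj), cast_zero, zero_mul]

theorem im_one_add_sqrtd_pow (d : ℤ) {N M : ℕ} (h : N < 2 * M) :
    ((1 + Zsqrtd.sqrtd : ℤ√d) ^ N).im = ∑ k ∈ range M, (N.choose (2 * k + 1) : ℤ) * d ^ k := by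
  have hcast : ∀ f : ℕ → ℕ, ∑ k ∈ range M, (f k : ℤ√d) * (d : ℤ√d) ^ k =
      ((∑ k ∈ range M, (f k : ℤ) * d ^ k : ℤ) : ℤ√d) := by
    intro f
    push_cast
    rfl
  rw [one_add_pow_eq_sum_even_add_sum_odd _ h, sq, Zsqrtd.dmuld, hcast, hcast, Zsqrtd.im_add,
    Zsqrtd.im_mul, Zsqrtd.im_intCast, Zsqrtd.im_intCast, Zsqrtd.re_intCast, Zsqrtd.re_sqrtd,
    Zsqrtd.im_sqrtd, zero_mul, zero_add, zero_add, one_mul]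

theorem sum_choose_odd_mul_neg_three_pow {n M : ℕ} (h : 3 * n < 2 * M) :
    ∑ k ∈ range M, ((3 * n).choose (2 * k + 1) : ℤ) * (-3) ^ k = 0 := by
  have hcube : (1 + Zsqrtd.sqrtd : ℤ√(-3)) ^ 3 = (-8 : ℤ) := by
    ext <;> simp [pow_succ]
  rw [← im_one_add_sqrtd_pow (-3) h, pow_mul, hcube, ← Int.cast_pow, Zsqrtd.im_intCast]

section PadicEstimates

variable (p : ℕ) [Fact p.Prime]

theorem norm_natCast_inv_le_pow_log (j : ℕ) : ‖(j : ℚ_[p])‖⁻¹ ≤ p ^ Nat.log p j := by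
  rcases eq_or_ne j 0 with rfl | hj
  · simp
  rw [Padic.norm_eq_zpow_neg_valuation (cast_ne_zero.2 hj), Padic.valuation_natCast, zpow_neg,
    inv_inv, zpow_natCast]
  exact pow_le_pow_right₀ (mod_cast (Fact.out : p.Prime).one_le) (padicValNat_le_nat_log j)

theorem norm_choose_sub_neg_one_pow_le (m k : ℕ) :
    ‖(m.choose k : ℚ_[p]) - (-1) ^ k‖ ≤ ‖(m + 1 : ℚ_[p])‖ * p ^ Nat.log p k := by
  induction k with
  | zero => simp
  | succ k ih =>
    have hpascal : (m.choose (k + 1) : ℚ_[p]) - (-1) ^ (k + 1) =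
        (m + 1).choose (k + 1) - (m.choose k - (-1) ^ k) := by
      rw [choose_succ_succ']
      push_cast
      ring
    have habsorb : ((m + 1).choose (k + 1) : ℚ_[p]) =
        (m + 1) * m.choose k * ((k + 1 : ℕ) : ℚ_[p])⁻¹ := by
      rw [eq_mul_inv_iff_mul_eq₀ (cast_ne_zero.2 k.succ_ne_zero)]
      exact_mod_cast (add_one_mul_choose_eq m k).symm
    rw [hpascal, sub_eq_add_neg]
    refine (Padic.nonarchimedean _ _).trans (max_le ?_ ((norm_neg _).trans_le (ih.trans ?_)))
    · rw [habsorb, norm_mul, norm_mul]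
      calc ‖(m + 1 : ℚ_[p])‖ * ‖(m.choose k : ℚ_[p])‖ * ‖((k + 1 : ℕ) : ℚ_[p])⁻¹‖
          ≤ ‖(m + 1 : ℚ_[p])‖ * 1 * p ^ Nat.log p (k + 1) := by
            rw [norm_inv]
            gcongr
            · exact IsUltrametricDist.norm_natCast_le_one _ _
            · exact norm_natCast_inv_le_pow_log p (k + 1)
        _ = ‖(m + 1 : ℚ_[p])‖ * p ^ Nat.log p (k + 1) := by rw [mul_one]
    · gcongr
      · exact_mod_cast (Fact.out : p.Prime).one_le
      · exact k.le_succ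

theorem norm_pow_div_mul_choose_sub_le (m : ℕ) {j k e : ℕ}
    (h : Nat.log p j + Nat.log p (2 * k + 1) + e ≤ k) :
    ‖(p : ℚ_[p]) ^ k / (2 * k + 1) * (m.choose j - (-1) ^ j)‖ ≤
      ‖(p : ℚ_[p]) ^ e * (m + 1)‖ := by
  have hp : (1 : ℝ) ≤ p := mod_cast (Fact.out : p.Prime).one_le
  have hp0 : (p : ℝ) ≠ 0 := by positivity
  have hden : ‖(2 * k + 1 : ℚ_[p])‖⁻¹ ≤ p ^ Nat.log p (2 * k + 1) := by
    exact_mod_cast norm_natCast_inv_le_pow_log p (2 * k + 1)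
  rw [norm_mul, norm_div, norm_mul, norm_pow, norm_pow, Padic.norm_p, div_eq_mul_inv]
  calc (p : ℝ)⁻¹ ^ k * ‖(2 * k + 1 : ℚ_[p])‖⁻¹ * ‖(m.choose j : ℚ_[p]) - (-1) ^ j‖
      ≤ (p : ℝ)⁻¹ ^ k * p ^ Nat.log p (2 * k + 1) *
          (‖(m + 1 : ℚ_[p])‖ * p ^ Nat.log p j) := by
        gcongr
        exact norm_choose_sub_neg_one_pow_le p m j
    _ = (p : ℝ)⁻¹ ^ k * p ^ (Nat.log p j + Nat.log p (2 * k + 1) + e) *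
          ((p : ℝ)⁻¹ ^ e * ‖(m + 1 : ℚ_[p])‖) := by
        rw [inv_pow, inv_pow]
        field_simp
        ring
    _ ≤ (p : ℝ)⁻¹ ^ k * p ^ k * ((p : ℝ)⁻¹ ^ e * ‖(m + 1 : ℚ_[p])‖) := by gcongr
    _ = (p : ℝ)⁻¹ ^ e * ‖(m + 1 : ℚ_[p])‖ := by
        rw [← mul_pow, inv_mul_cancel₀ hp0, one_pow, one_mul]

theorem padicValNat_eq_of_norm_natCast_eq {a b : ℕ} (ha : a ≠ 0) (hb : b ≠ 0)
    (h : ‖(a : ℚ_[p])‖ = ‖(b : ℚ_[p])‖) : padicValNat p a = padicValNat p b := by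
  have hp := (Fact.out : p.Prime)
  rw [Padic.norm_eq_zpow_neg_valuation (cast_ne_zero.2 ha),
    Padic.norm_eq_zpow_neg_valuation (cast_ne_zero.2 hb), Padic.valuation_natCast,
    Padic.valuation_natCast] at h
  have := zpow_right_injective₀ (mod_cast hp.pos) (mod_cast hp.ne_one) h
  lia

end PadicEstimates

theorem log_three_add_log_three_lt {k : ℕ} (hk : 2 ≤ k) :
    Nat.log 3 k + Nat.log 3 (2 * k + 1) < k := by
  obtain rfl | hk3 := hk.eq_or_lt
  · norm_num
  have hpow : k * (2 * k + 1) < 3 ^ k := by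
    induction k, hk3 using Nat.le_induction with
    | base => norm_num
    | succ k hk3 ih =>
      have := ih (by lia)
      rw [pow_succ]
      nlinarith
  refine (Nat.pow_lt_pow_iff_right (one_lt_succ_succ 1)).1 (hpow.trans_le' ?_)
  rw [pow_add]
  exact Nat.mul_le_mul (pow_log_le_self 3 (by lia)) (pow_log_le_self 3 (by lia))

theorem log_three_two_mul_add_log_three_le (k : ℕ) :
    Nat.log 3 (2 * k) + Nat.log 3 (2 * k + 1) ≤ k := by
  obtain hk | hk := lt_or_ge k 2
  · interval_cases k <;> norm_num
  have hdouble : Nat.log 3 (2 * k) ≤ Nat.log 3 k + 1 := by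
    rw [← Nat.log_mul_base (one_lt_succ_succ 1) (by lia)]
    exact Nat.log_mono_right (by lia)
  have := log_three_add_log_three_lt hk
  lia

theorem sum_neg_three_pow_div_mul_choose_eq_zero (K : Type*) [Field K] [CharZero K] {n M : ℕ}
    (h : 3 * (n + 1) < 2 * M) :
    ∑ k ∈ range M, (-3 : K) ^ k / (2 * k + 1) * (3 * n + 2).choose (2 * k) = 0 := by
  have hn : (3 * n + 3 : K) ≠ 0 := by exact_mod_cast (3 * n + 2).succ_ne_zero
  refine (_root_.mul_eq_zero.1 ?_).resolve_left hn
  have hodd := congrArg (Int.cast : ℤ → K) (sum_choose_odd_mul_neg_three_pow h)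
  push_cast at hodd
  rw [mul_sum, ← hodd]
  refine sum_congr rfl fun k _ => ?_
  have habsorb := congrArg (Nat.cast : ℕ → K) (add_one_mul_choose_eq (3 * n + 2) (2 * k))
  have := two_mul_natCast_add_one_ne_zero (K := K) k
  push_cast at habsorb
  rw [mul_add_one]
  field_simp
  linear_combination habsorb

theorem norm_sum_neg_three_pow_div_le {n M : ℕ} (h : 3 * (n + 1) < 2 * M) :
    ‖∑ k ∈ range M, (-3 : ℚ_[3]) ^ k / (2 * k + 1)‖ ≤ ‖(3 * (n + 1) : ℚ_[3])‖ := by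
  rw [← norm_neg, ← zero_sub, ← sum_neg_three_pow_div_mul_choose_eq_zero ℚ_[3] h, ← sum_sub_distrib]
  refine IsUltrametricDist.norm_sum_le_of_forall_le_of_nonneg (norm_nonneg _) fun k _ => ?_
  have hterm := norm_pow_div_mul_choose_sub_le 3 (3 * n + 2) (e := 0)
    (log_three_two_mul_add_log_three_le k)
  have hsign : (-3 : ℚ_[3]) ^ k / (2 * k + 1) * (3 * n + 2).choose (2 * k) -
      (-3) ^ k / (2 * k + 1) =
      (-1) ^ k * (3 ^ k / (2 * k + 1) * ((3 * n + 2).choose (2 * k) - (-1) ^ (2 * k))) := by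
    rw [(even_two_mul k).neg_one_pow, neg_pow 3]
    ring
  rw [hsign, norm_mul, norm_pow, norm_neg, norm_one, one_pow, one_mul]
  have hbound : ((3 : ℕ) : ℚ_[3]) ^ 0 * ((3 * n + 2 : ℕ) + 1) = 3 * (n + 1) := by
    push_cast
    ring
  rw [hbound] at hterm
  exact hterm

theorem norm_binomialMoment_three_sub_sum_le (m : ℕ) {M : ℕ} (h : m + 2 ≤ M) :
    ‖binomialMoment (3 : ℚ_[3]) m - ∑ k ∈ range M, (-3 : ℚ_[3]) ^ k / (2 * k + 1) - (m + 1)‖ ≤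
      ‖(3 * (m + 1) : ℚ_[3])‖ := by
  obtain ⟨L, rfl⟩ := exists_add_of_le (le_of_add_left_le h)
  have hdiff : binomialMoment (3 : ℚ_[3]) m -
      ∑ k ∈ range (2 + L), (-3 : ℚ_[3]) ^ k / (2 * k + 1) =
      ∑ k ∈ range (2 + L), (3 : ℚ_[3]) ^ k / (2 * k + 1) * (m.choose k - (-1) ^ k) := by
    rw [binomialMoment_eq_sum_range 3 (by lia : m < 2 + L), ← sum_sub_distrib]
    refine sum_congr rfl fun k _ => ?_
    rw [neg_pow 3]
    ring
  have hfirst : ∑ k ∈ range 2, (3 : ℚ_[3]) ^ k / (2 * k + 1) * (m.choose k - (-1) ^ k) =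
      m + 1 := by
    norm_num [sum_range_succ]
  rw [hdiff, sum_range_add, hfirst, add_sub_cancel_left]
  refine IsUltrametricDist.norm_sum_le_of_forall_le_of_nonneg (norm_nonneg _) fun k _ => ?_
  simpa using norm_pow_div_mul_choose_sub_le 3 m (e := 1)
    (log_three_add_log_three_lt (Nat.le_add_right 2 k))

theorem norm_binomialMoment_three (m : ℕ) :
    ‖binomialMoment (3 : ℚ_[3]) m‖ = ‖(m + 1 : ℚ_[3])‖ := by
  have hm : (m + 1 : ℚ_[3]) ≠ 0 := cast_add_one_ne_zero m
  have hlt : ‖(3 * (m + 1) : ℚ_[3])‖ < ‖(m + 1 : ℚ_[3])‖ := by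
    rw [norm_mul]
    exact mul_lt_of_lt_one_left (norm_pos_iff.2 hm) (mod_cast Padic.norm_p_lt_one (p := 3))
  have happrox := norm_binomialMoment_three_sub_sum_le m (M := 3 * m + 3) (by lia)
  have hpartial := norm_sum_neg_three_pow_div_le (n := m) (M := 3 * m + 3) (by lia)
  refine Padic.norm_eq_of_norm_sub_lt_right (lt_of_le_of_lt ?_ hlt)
  rw [sub_right_comm] at happrox
  rw [← sub_add_cancel (binomialMoment (3 : ℚ_[3]) m - (m + 1)) (∑ k ∈ range (3 * m + 3), _)]
  exact (IsUltrametricDist.norm_add_le_max _ _).trans (max_le happrox hpartial)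

theorem norm_sum_centralBinom (m : ℕ) :
    ‖∑ k ∈ range (m + 1), (centralBinom k : ℚ_[3])‖ =
      ‖((m + 1) ^ 2 * centralBinom (m + 1) : ℚ_[3])‖ := by
  have htwo : ‖(2 : ℚ_[3])‖ = 1 :=
    mod_cast (Padic.norm_natCast_eq_one_iff (p := 3) (n := 2)).2 (by norm_num)
  have hfour : ‖(4 : ℚ_[3])‖ = 1 :=
    mod_cast (Padic.norm_natCast_eq_one_iff (p := 3) (n := 4)).2 (by norm_num)
  have hid := congrArg norm (two_mul_four_pow_mul_sum_centralBinom (3 : ℚ_[3]) m)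
  rw [show (1 + 3 : ℚ_[3]) / 4 = 1 by norm_num] at hid
  simp only [one_pow, mul_one, norm_mul, norm_pow, htwo, hfour, one_mul,
    norm_binomialMoment_three] at hid
  rw [hid, norm_mul, norm_pow]
  ring

theorem stmt_0 (n : ℕ) (hn : 0 < n) :
    padicValNat 3 (∑ k ∈ Finset.range n, Nat.choose (2 * k) k) =
      2 * padicValNat 3 n + padicValNat 3 (Nat.choose (2 * n) n) := by
  obtain ⟨m, rfl⟩ := exists_eq_add_one.2 hn
  simp only [← centralBinom_eq_two_mul_choose]
  have hsum : ∑ k ∈ range (m + 1), centralBinom k ≠ 0 := by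
    rw [sum_range_succ']
    simp
  have hbinom := centralBinom_ne_zero (m + 1)
  rw [padicValNat_eq_of_norm_natCast_eq 3 hsum (mul_ne_zero (pow_ne_zero 2 hn.ne') hbinom)
      (mod_cast norm_sum_centralBinom m),
    padicValNat.mul (pow_ne_zero 2 hn.ne') hbinom, padicValNat.pow]
end

section
/- Let m ≡ 1 (mod 3) be an integer. Then for every positive integer n, the 3-adic valuation of (1/n)·∑_{k=0}^{n-1} C(2k,k)/m^k is at least min{ν₃(n), ν₃(m−1) − 1}. -/
/-!
The finite sum is a multiple of an integral: with `N = n - 1` and `x = 1 / m`,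
`2 · 4 ^ N · ∑ C(2k, k) x ^ k = n · C(2n, n) · ∫₀¹ (1 + (4x - 1) t²) ^ N dt`.
Since `4x - 1` is close to `3`, it suffices to show that `∫₀¹ (1 + 3t²) ^ N dt` is divisible by `n`
in `ℤ₃`. The exponent `N` is `3`-adically close to `-1`, where the integral "is" `arctan √3 / √3`,
a logarithm of the root of unity `(1 + √-3) / (1 - √-3)`, hence `0`. To make this precise without
infinite series, the integral is compared with `∑ C(N, 2i) (-3) ^ i / (2i + 1)`, a multiple of
`(1 + √-3) ^ n - (1 - √-3) ^ n`, which vanishes for `3 ∣ n` because `(1 ± √-3) ^ 3 = -8`. The two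
sums agree up to multiples of `n` because both `C(N, i)` and `(-1) ^ i C(N, 2i)` approximate
`C(-1, i) = (-1) ^ i`.
-/

open Finset IsUltrametricDist

/-! ### The integral and the central binomial sum -/

lemma two_mul_natCast_add_one_ne_zero_s3 {R : Type*} [NonAssocSemiring R] [CharZero R] (i : ℕ) :
    2 * (i : R) + 1 ≠ 0 := by
  exact_mod_cast Nat.cast_add_one_ne_zero (R := R) (2 * i)

section Field

variable {K : Type*} [Field K]

/-- The integral `∫₀¹ (1 + z t²) ^ N dt`, expanded in powers of `z` so that it makes sense over any
field of characteristic zero. -/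
def integralOneAddMulSqPow (N : ℕ) (z : K) : K :=
  ∑ i ∈ range (N + 1), (N.choose i : K) * (z ^ i / (2 * i + 1))

lemma integralOneAddMulSqPow_zero_right (N : ℕ) : integralOneAddMulSqPow N (0 : K) = 1 := by
  rw [integralOneAddMulSqPow, sum_range_succ']
  simp

variable [CharZero K]

-- Integration by parts.
lemma integralOneAddMulSqPow_succ (N : ℕ) (z : K) :
    (2 * N + 3) * integralOneAddMulSqPow (N + 1) z =
      2 * (N + 1) * integralOneAddMulSqPow N z + (1 + z) ^ (N + 1) := by
  have extend : integralOneAddMulSqPow N z =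
      ∑ i ∈ range (N + 1 + 1), (N.choose i : K) * (z ^ i / (2 * i + 1)) := by
    simp [integralOneAddMulSqPow, sum_range_succ _ (N + 1)]
  rw [extend, integralOneAddMulSqPow, add_comm (1 : K) z, add_pow, mul_sum, mul_sum,
    ← sum_add_distrib]
  refine sum_congr rfl fun i hi => ?_
  have absorb : ((N : K) + 1) * N.choose i = (N + 1).choose i * (N + 1 - i) := by
    have := congrArg (Nat.cast (R := K)) (Nat.choose_mul_succ_eq N i)
    push_cast [Nat.cast_sub (mem_range_succ_iff.mp hi)] at this
    linear_combination this
  have := two_mul_natCast_add_one_ne_zero_s3 (R := K) i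
  field_simp
  simp only [one_pow, mul_one]
  linear_combination (-2 * z ^ i) * absorb

theorem sum_range_centralBinom_mul_pow (N : ℕ) (x : K) :
    2 * 4 ^ N * ∑ k ∈ range (N + 1), (k.centralBinom : K) * x ^ k =
      (N + 1) * (N + 1).centralBinom * integralOneAddMulSqPow N (4 * x - 1) := by
  induction N with
  | zero => simp [integralOneAddMulSqPow, Nat.centralBinom]
  | succ N ih =>
    have parts := integralOneAddMulSqPow_succ N (4 * x - 1)
    rw [add_sub_cancel, mul_pow] at parts
    have central : ((N : K) + 2) * (N + 1 + 1).centralBinom =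
        2 * (2 * N + 3) * (N + 1).centralBinom := by
      have := congrArg (Nat.cast (R := K)) (Nat.succ_mul_centralBinom_succ (N + 1))
      push_cast at this
      linear_combination this
    rw [sum_range_succ]
    push_cast
    linear_combination 4 * ih - 2 * ((N + 1).centralBinom : K) * parts -
      integralOneAddMulSqPow (N + 1) (4 * x - 1) * central

end Field

/-! ### Odd-indexed binomial sums -/

lemma sum_range_two_mul {M : Type*} [AddCommMonoid M] (f : ℕ → M) (n : ℕ) :
    ∑ k ∈ range (2 * n), f k = ∑ i ∈ range n, (f (2 * i) + f (2 * i + 1)) := by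
  induction n with
  | zero => simp
  | succ n ih => rw [mul_add_one, sum_range_succ, sum_range_succ, sum_range_succ, ih, add_assoc]

lemma one_add_pow_sub_one_sub_pow {R : Type*} [CommRing R] (s : R) (n : ℕ) :
    (1 + s) ^ n - (1 - s) ^ n =
      2 * s * ∑ i ∈ range n, (n.choose (2 * i + 1) : R) * (s ^ 2) ^ i := by
  rcases n.eq_zero_or_pos with rfl | hn
  · simp
  have expand (t : R) : (1 + t) ^ n = ∑ k ∈ range (2 * n), (n.choose k : R) * t ^ k := by
    rw [add_comm, add_pow]
    refine sum_subset_zero_on_sdiff (range_subset_range.mpr (by omega)) (fun k hk => ?_)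
      fun k _ => by ring
    rw [Nat.choose_eq_zero_of_lt (by simp at hk; omega)]
    simp
  rw [sub_eq_add_neg 1 s, expand, expand, ← sum_sub_distrib, sum_range_two_mul, mul_sum]
  refine sum_congr rfl fun i _ => ?_
  rw [Even.neg_pow (even_two_mul i), Odd.neg_pow (odd_two_mul_add_one i)]
  ring

lemma sum_choose_odd_mul_neg_three_pow_eq_zero {n : ℕ} (hn : 3 ∣ n) :
    ∑ i ∈ range n, (n.choose (2 * i + 1) : ℤ) * (-3) ^ i = 0 := by
  obtain ⟨k, rfl⟩ := hn
  let s : ℤ√(-3) := Zsqrtd.sqrtd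
  have s_sq : s ^ 2 = -3 := by rw [sq]; rfl
  have cube_add : (1 + s) ^ 3 = -8 := by linear_combination (3 + s) * s_sq
  have cube_sub : (1 - s) ^ 3 = -8 := by linear_combination (3 - s) * s_sq
  set V : ℤ := ∑ i ∈ range (3 * k), ((3 * k).choose (2 * i + 1) : ℤ) * (-3) ^ i with V_def
  have two_mul_sqrt_mul_eq_zero : 2 * s * (V : ℤ√(-3)) = 0 := by
    have expand := one_add_pow_sub_one_sub_pow s (3 * k)
    rw [pow_mul, pow_mul, cube_add, cube_sub, sub_self, s_sq] at expand
    rw [V_def]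
    push_cast
    exact expand.symm
  have : ((-6 * V : ℤ) : ℤ√(-3)) = 0 := by
    push_cast
    linear_combination s * two_mul_sqrt_mul_eq_zero - 2 * (V : ℤ√(-3)) * s_sq
  simpa using Int.cast_eq_zero.mp this

lemma sum_choose_even_mul_neg_three_pow_div_eq_zero {K : Type*} [Field K] [CharZero K] {N : ℕ}
    (hN : 3 ∣ N + 1) :
    ∑ i ∈ range (N + 1), (N.choose (2 * i) : K) * ((-3) ^ i / (2 * i + 1)) = 0 := by
  have odd_sum := congrArg (Int.cast (R := K)) (sum_choose_odd_mul_neg_three_pow_eq_zero hN)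
  push_cast at odd_sum
  refine (mul_eq_zero.mp ?_).resolve_left (Nat.cast_add_one_ne_zero (R := K) N)
  rw [← odd_sum, mul_sum]
  refine sum_congr rfl fun i _ => ?_
  have absorb := congrArg (Nat.cast (R := K)) (Nat.add_one_mul_choose_eq N (2 * i))
  push_cast at absorb
  have := two_mul_natCast_add_one_ne_zero_s3 (R := K) i
  field_simp
  linear_combination absorb

/-! ### `p`-adic estimates -/

lemma norm_sub_le_max_norm {E : Type*} [SeminormedAddGroup E] [IsUltrametricDist E] (x y : E) :
    ‖x - y‖ ≤ max ‖x‖ ‖y‖ := by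
  simpa only [sub_eq_add_neg, norm_neg] using norm_add_le_max x (-y)

section Padic

variable {p : ℕ} [Fact p.Prime]

lemma padic_inv_norm_natCast_le_pow_log (k : ℕ) :
    ‖(k : ℚ_[p])‖⁻¹ ≤ (p : ℝ) ^ Nat.log p k := by
  have one_le_p : (1 : ℝ) ≤ p := mod_cast (Fact.out : p.Prime).one_le
  rcases eq_or_ne k 0 with rfl | hk
  · simp
  rw [Padic.norm_eq_zpow_neg_valuation (mod_cast hk), Padic.valuation_natCast, zpow_neg, inv_inv,
    zpow_natCast]
  exact pow_le_pow_right₀ one_le_p (padicValNat_le_nat_log k)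

lemma padic_inv_norm_two_mul_add_one_le_pow (i : ℕ) :
    ‖2 * (i : ℚ_[p]) + 1‖⁻¹ ≤ (p : ℝ) ^ i := by
  have hp : p.Prime := Fact.out
  have one_le_p : (1 : ℝ) ≤ p := mod_cast hp.one_le
  rcases hp.eq_two_or_odd' with rfl | hodd
  · have : ‖((2 * i + 1 : ℕ) : ℚ_[2])‖ = 1 := Padic.norm_natCast_eq_one_iff.mpr (by simp)
    push_cast at this
    rw [this, inv_one]
    exact one_le_pow₀ one_le_p
  · have bernoulli : 2 * i + 1 ≤ p ^ i := by
      have : 3 ≤ p := by have := hp.two_le; grind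
      calc 2 * i + 1 = 1 + i * 2 := by ring
        _ ≤ (1 + 2) ^ i := by exact_mod_cast one_add_mul_le_pow (a := (2 : ℤ)) (by norm_num) i
        _ ≤ p ^ i := Nat.pow_le_pow_left this i
    have log_le : Nat.log p (2 * i + 1) ≤ i :=
      (Nat.log_mono_right bernoulli).trans (Nat.log_pow hp.one_lt i).le
    have := padic_inv_norm_natCast_le_pow_log (p := p) (2 * i + 1)
    push_cast at this
    exact this.trans (pow_le_pow_right₀ one_le_p log_le)

lemma padic_norm_choose_succ_le (N i : ℕ) :
    ‖((N + 1).choose (i + 1) : ℚ_[p])‖ ≤ ‖(N : ℚ_[p]) + 1‖ * (p : ℝ) ^ Nat.log p (i + 1) := by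
  have absorb : ((N + 1).choose (i + 1) : ℚ_[p]) =
      (N + 1) * N.choose i * ((i + 1 : ℕ) : ℚ_[p])⁻¹ := by
    rw [eq_mul_inv_iff_mul_eq₀ (mod_cast i.succ_ne_zero)]
    exact_mod_cast (Nat.add_one_mul_choose_eq N i).symm
  rw [absorb, norm_mul, norm_mul, norm_inv]
  gcongr
  · exact mul_le_of_le_one_right (norm_nonneg _) (norm_natCast_le_one _ _)
  · exact padic_inv_norm_natCast_le_pow_log _

lemma padic_norm_choose_sub_neg_one_pow_le (N i : ℕ) :
    ‖(N.choose i : ℚ_[p]) - (-1) ^ i‖ ≤ ‖(N : ℚ_[p]) + 1‖ * (p : ℝ) ^ Nat.log p i := by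
  induction i with
  | zero => simp
  | succ i ih =>
    have pascal : (N.choose (i + 1) : ℚ_[p]) - (-1) ^ (i + 1) =
        (N + 1).choose (i + 1) - (N.choose i - (-1) ^ i) := by
      rw [Nat.choose_succ_succ]
      push_cast
      ring
    have one_le_p : (1 : ℝ) ≤ p := mod_cast (Fact.out : p.Prime).one_le
    rw [pascal]
    refine (norm_sub_le_max_norm _ _).trans (max_le (padic_norm_choose_succ_le N i) (ih.trans ?_))
    gcongr
    exact i.le_succ

lemma padic_norm_choose_sub_choose_two_mul_le (N i : ℕ) :
    ‖(N.choose i : ℚ_[p]) - (-1) ^ i * N.choose (2 * i)‖ ≤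
      ‖(N : ℚ_[p]) + 1‖ * (p : ℝ) ^ Nat.log p (2 * i) := by
  have one_le_p : (1 : ℝ) ≤ p := mod_cast (Fact.out : p.Prime).one_le
  have split : (N.choose i : ℚ_[p]) - (-1) ^ i * N.choose (2 * i) =
      (N.choose i - (-1) ^ i) - (-1) ^ i * (N.choose (2 * i) - (-1) ^ (2 * i)) := by
    rw [pow_mul, neg_one_sq, one_pow]
    ring
  rw [split]
  refine (norm_sub_le_max_norm _ _).trans (max_le ?_ ?_)
  · refine (padic_norm_choose_sub_neg_one_pow_le N i).trans ?_
    gcongr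
    omega
  · simpa using padic_norm_choose_sub_neg_one_pow_le (p := p) N (2 * i)

lemma padic_norm_pow_sub_pow_le {z w : ℚ_[p]} (hz : ‖z‖ ≤ (p : ℝ)⁻¹) (hw : ‖w‖ ≤ (p : ℝ)⁻¹)
    (i : ℕ) : ‖z ^ i - w ^ i‖ ≤ p * ‖z - w‖ * (p : ℝ)⁻¹ ^ i := by
  have p_ne_zero : (p : ℝ) ≠ 0 := mod_cast (Fact.out : p.Prime).ne_zero
  rcases i with _ | i
  · simpa only [pow_zero, sub_self, norm_zero, mul_one] using by positivity
  have factor : ‖∑ j ∈ range (i + 1), z ^ j * w ^ (i - j)‖ ≤ (p : ℝ)⁻¹ ^ i := by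
    refine norm_sum_le_of_forall_le_of_nonneg (by positivity) fun j hj => ?_
    calc ‖z ^ j * w ^ (i - j)‖ ≤ (p : ℝ)⁻¹ ^ j * (p : ℝ)⁻¹ ^ (i - j) := by
          rw [norm_mul, norm_pow, norm_pow]
          gcongr
      _ = (p : ℝ)⁻¹ ^ i := by rw [← pow_add, Nat.add_sub_cancel' (mem_range_succ_iff.mp hj)]
  calc ‖z ^ (i + 1) - w ^ (i + 1)‖
      = ‖∑ j ∈ range (i + 1), z ^ j * w ^ (i - j)‖ * ‖z - w‖ := by
        rw [← norm_mul, ← (Commute.all z w).geom_sum₂_mul (i + 1)]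
        rfl
    _ ≤ (p : ℝ)⁻¹ ^ i * ‖z - w‖ := by gcongr
    _ = p * ‖z - w‖ * (p : ℝ)⁻¹ ^ (i + 1) := by rw [pow_succ]; field_simp

theorem padic_norm_integralOneAddMulSqPow_sub_le (N : ℕ) {z w : ℚ_[p]} (hz : ‖z‖ ≤ (p : ℝ)⁻¹)
    (hw : ‖w‖ ≤ (p : ℝ)⁻¹) :
    ‖integralOneAddMulSqPow N z - integralOneAddMulSqPow N w‖ ≤ p * ‖z - w‖ := by
  have p_ne_zero : (p : ℝ) ≠ 0 := mod_cast (Fact.out : p.Prime).ne_zero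
  rw [integralOneAddMulSqPow, integralOneAddMulSqPow, ← sum_sub_distrib]
  refine norm_sum_le_of_forall_le_of_nonneg (by positivity) fun i _ => ?_
  calc ‖(N.choose i : ℚ_[p]) * (z ^ i / (2 * i + 1)) - N.choose i * (w ^ i / (2 * i + 1))‖
      = ‖(N.choose i : ℚ_[p])‖ * (‖z ^ i - w ^ i‖ * ‖2 * (i : ℚ_[p]) + 1‖⁻¹) := by
        rw [← mul_sub, ← sub_div, div_eq_mul_inv, norm_mul, norm_mul, norm_inv]
    _ ≤ 1 * (p * ‖z - w‖ * (p : ℝ)⁻¹ ^ i * (p : ℝ) ^ i) := by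
        gcongr
        · exact norm_natCast_le_one _ _
        · exact padic_norm_pow_sub_pow_le hz hw i
        · exact padic_inv_norm_two_mul_add_one_le_pow i
    _ = p * ‖z - w‖ := by
        rw [one_mul, mul_assoc, ← mul_pow, inv_mul_cancel₀ p_ne_zero, one_pow, mul_one]

lemma padic_norm_integralOneAddMulSqPow_le_one (N : ℕ) {z : ℚ_[p]} (hz : ‖z‖ ≤ (p : ℝ)⁻¹) :
    ‖integralOneAddMulSqPow N z‖ ≤ 1 := by
  have p_pos : (0 : ℝ) < p := mod_cast (Fact.out : p.Prime).pos
  have close : ‖integralOneAddMulSqPow N z - 1‖ ≤ 1 := by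
    have := padic_norm_integralOneAddMulSqPow_sub_le N hz (w := 0) (by simp)
    rw [integralOneAddMulSqPow_zero_right, sub_zero] at this
    exact this.trans ((le_inv_mul_iff₀ p_pos).mp (by simpa using hz))
  simpa using (norm_add_le_max (integralOneAddMulSqPow N z - 1) 1).trans (max_le close (by simp))

lemma padic_norm_inv_mul_sum_centralBinom_le (hp : p ≠ 2) {n : ℕ} (hn : 0 < n) (x : ℚ_[p]) :
    ‖(n : ℚ_[p])⁻¹ * ∑ k ∈ range n, (k.centralBinom : ℚ_[p]) * x ^ k‖ ≤
      ‖integralOneAddMulSqPow (n - 1) (4 * x - 1)‖ := by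
  obtain ⟨N, rfl⟩ := Nat.exists_eq_add_one.mpr hn
  have coprime_two : Nat.Coprime p 2 := (Nat.coprime_primes Fact.out Nat.prime_two).mpr hp
  have unit : ‖(2 * 4 ^ N : ℚ_[p])‖ = 1 := by
    have : p.Coprime (2 * (2 ^ 2) ^ N) :=
      coprime_two.mul_right ((coprime_two.pow_right 2).pow_right N)
    simpa using Padic.norm_natCast_eq_one_iff.mpr this
  have N_ne : (N : ℚ_[p]) + 1 ≠ 0 := Nat.cast_add_one_ne_zero N
  have identity : (2 * 4 ^ N : ℚ_[p]) *
      (((N + 1 : ℕ) : ℚ_[p])⁻¹ * ∑ k ∈ range (N + 1), (k.centralBinom : ℚ_[p]) * x ^ k) =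
        (N + 1).centralBinom * integralOneAddMulSqPow N (4 * x - 1) := by
    rw [mul_left_comm, sum_range_centralBinom_mul_pow]
    push_cast
    field_simp
  rw [← one_mul ‖_ * _‖, ← unit, ← norm_mul, identity, norm_mul]
  exact mul_le_of_le_one_left (norm_nonneg _) (norm_natCast_le_one _ _)

lemma max_padic_norm_le_of_le_min_valuation {n e : ℕ} {k : ℤ} (hk : (p : ℤ) ∣ k)
    (he : (e : ℕ∞) ≤ min (padicValNat p n : ℕ∞) (emultiplicity (p : ℤ) k - 1)) :
    max ‖(n : ℚ_[p])‖ (p * ‖(k : ℚ_[p])‖) ≤ (p : ℝ) ^ (-(e : ℤ)) := by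
  have p_pos : (0 : ℝ) < p := mod_cast (Fact.out : p.Prime).pos
  obtain ⟨he_n, he_k⟩ := le_min_iff.mp he
  have dvd_n : p ^ e ∣ n := (pow_dvd_pow p (mod_cast he_n)).trans pow_padicValNat_dvd
  have dvd_k : (p : ℤ) ^ (e + 1) ∣ k := by
    rw [pow_dvd_iff_le_emultiplicity, Nat.cast_add_one]
    have one_le : 1 ≤ emultiplicity (p : ℤ) k := by
      simpa using le_emultiplicity_of_pow_dvd (k := 1) (by simpa using hk)
    exact (add_le_add_left he_k 1).trans_eq (tsub_add_cancel_of_le one_le)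
  refine max_le ?_ ?_
  · exact_mod_cast (Padic.norm_int_le_pow_iff_dvd (n : ℤ) e).mpr (mod_cast dvd_n)
  · calc p * ‖(k : ℚ_[p])‖ ≤ p * (p : ℝ) ^ (-((e + 1 : ℕ) : ℤ)) := by
          gcongr
          exact (Padic.norm_int_le_pow_iff_dvd k (e + 1)).mpr (mod_cast dvd_k)
      _ = (p : ℝ) ^ (-(e : ℤ)) := by
          rw [← zpow_one_add₀ p_pos.ne']
          congr 1
          push_cast
          ring

end Padic

/-! ### The prime three -/

lemma log_three_two_mul_add_log_three_two_mul_add_one_le (i : ℕ) :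
    Nat.log 3 (2 * i) + Nat.log 3 (2 * i + 1) ≤ i := by
  rcases le_or_gt i 1 with hi | hi
  · interval_cases i <;> norm_num
  have growth (q : ℕ) (hq : 1 ≤ q) : 4 * q + 3 < 3 ^ (q + 1) := by
    induction q, hq using Nat.le_induction with
    | base => norm_num
    | succ q hq ih => rw [pow_succ]; omega
  have half : Nat.log 3 (2 * i + 1) ≤ i / 2 :=
    Nat.lt_succ_iff.mp (Nat.log_lt_of_lt_pow (by omega) (by have := growth (i / 2); omega))
  have : Nat.log 3 (2 * i) ≤ Nat.log 3 (2 * i + 1) := Nat.log_mono_right (2 * i).le_succ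
  omega

lemma integralOneAddMulSqPow_three {K : Type*} [Field K] [CharZero K] {N : ℕ} (hN : 3 ∣ N + 1) :
    integralOneAddMulSqPow N (3 : K) = ∑ i ∈ range (N + 1),
      ((N.choose i : K) - (-1) ^ i * N.choose (2 * i)) * (3 ^ i / (2 * i + 1)) := by
  rw [← sub_zero (integralOneAddMulSqPow N 3),
    ← sum_choose_even_mul_neg_three_pow_div_eq_zero hN, integralOneAddMulSqPow, ← sum_sub_distrib]
  refine sum_congr rfl fun i _ => ?_
  rw [neg_pow (3 : K)]
  ring

theorem padic_norm_integralOneAddMulSqPow_three_le (N : ℕ) :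
    ‖integralOneAddMulSqPow N (3 : ℚ_[3])‖ ≤ ‖(N : ℚ_[3]) + 1‖ := by
  have norm_three : ‖(3 : ℚ_[3])‖ = 3⁻¹ := mod_cast Padic.norm_p (p := 3)
  by_cases hN : 3 ∣ N + 1
  · rw [integralOneAddMulSqPow_three hN]
    refine norm_sum_le_of_forall_le_of_nonneg (norm_nonneg _) fun i _ => ?_
    have inv_norm_odd := padic_inv_norm_natCast_le_pow_log (p := 3) (2 * i + 1)
    push_cast at inv_norm_odd
    calc ‖((N.choose i : ℚ_[3]) - (-1) ^ i * N.choose (2 * i)) * (3 ^ i / (2 * i + 1))‖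
        = ‖(N.choose i : ℚ_[3]) - (-1) ^ i * N.choose (2 * i)‖ * ‖2 * (i : ℚ_[3]) + 1‖⁻¹ /
            3 ^ i := by
          rw [norm_mul, norm_div, norm_pow, norm_three, inv_pow]
          ring
      _ ≤ ‖(N : ℚ_[3]) + 1‖ * 3 ^ Nat.log 3 (2 * i) * 3 ^ Nat.log 3 (2 * i + 1) / 3 ^ i := by
          gcongr
          exact_mod_cast padic_norm_choose_sub_choose_two_mul_le (p := 3) N i
      _ ≤ ‖(N : ℚ_[3]) + 1‖ := by
          rw [mul_assoc, ← pow_add]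
          refine div_le_of_le_mul₀ (by positivity) (norm_nonneg _) ?_
          gcongr
          · norm_num
          · exact log_three_two_mul_add_log_three_two_mul_add_one_le i
  · have : ‖((N + 1 : ℕ) : ℚ_[3])‖ = 1 :=
      Padic.norm_natCast_eq_one_iff.mpr ((Nat.Prime.coprime_iff_not_dvd Nat.prime_three).mpr hN)
    push_cast at this
    rw [this]
    exact padic_norm_integralOneAddMulSqPow_le_one N (mod_cast norm_three.le)

lemma padic_norm_integralOneAddMulSqPow_le_max (N : ℕ) {z : ℚ_[3]} (hz : ‖z - 3‖ ≤ 3⁻¹) :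
    ‖integralOneAddMulSqPow N z‖ ≤ max ‖(N : ℚ_[3]) + 1‖ (3 * ‖z - 3‖) := by
  have norm_three : ‖(3 : ℚ_[3])‖ = 3⁻¹ := mod_cast Padic.norm_p (p := 3)
  have norm_z : ‖z‖ ≤ 3⁻¹ := by
    simpa using (norm_add_le_max (z - 3) 3).trans (max_le hz norm_three.le)
  rw [← add_sub_cancel (integralOneAddMulSqPow N 3) (integralOneAddMulSqPow N z)]
  exact (norm_add_le_max _ _).trans <| max_le_max (padic_norm_integralOneAddMulSqPow_three_le N) <|
    mod_cast padic_norm_integralOneAddMulSqPow_sub_le N (mod_cast norm_z) (mod_cast norm_three.le)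

theorem stmt_3_general {m : ℚ_[3]} (hm : ‖m - 1‖ < 1) {n : ℕ} (hn : 0 < n) :
    ‖(n : ℚ_[3])⁻¹ * ∑ k ∈ range n, (Nat.choose (2 * k) k : ℚ_[3]) / m ^ k‖ ≤
      max ‖(n : ℚ_[3])‖ (3 * ‖m - 1‖) := by
  have norm_m : ‖m‖ = 1 := by
    simpa using Padic.norm_eq_of_norm_sub_lt_right (z1 := m) (z2 := 1) (by simpa using hm)
  have m_ne_zero : m ≠ 0 := norm_ne_zero_iff.mp (by simp [norm_m])
  have norm_four : ‖(4 : ℚ_[3])‖ = 1 :=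
    mod_cast Padic.norm_natCast_eq_one_iff.mpr (by norm_num : Nat.Coprime 3 4)
  have norm_sub_three : ‖4 * m⁻¹ - 1 - 3‖ = ‖m - 1‖ := by
    rw [show 4 * m⁻¹ - 1 - 3 = 4 * (1 - m) * m⁻¹ by field_simp; ring, norm_mul, norm_mul,
      norm_inv, norm_m, norm_four, one_mul, inv_one, mul_one, norm_sub_rev]
  have close : ‖4 * m⁻¹ - 1 - 3‖ ≤ 3⁻¹ := by
    rw [norm_sub_three]
    have := (Padic.norm_le_pow_iff_norm_lt_pow_add_one (m - 1) (-1)).mpr (by simpa using hm)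
    rwa [zpow_neg_one] at this
  have cast_n : ((n - 1 : ℕ) : ℚ_[3]) + 1 = n := mod_cast Nat.sub_add_cancel hn
  calc ‖(n : ℚ_[3])⁻¹ * ∑ k ∈ range n, (Nat.choose (2 * k) k : ℚ_[3]) / m ^ k‖
      = ‖(n : ℚ_[3])⁻¹ * ∑ k ∈ range n, (k.centralBinom : ℚ_[3]) * m⁻¹ ^ k‖ := by
        simp only [Nat.centralBinom, div_eq_mul_inv, inv_pow]
    _ ≤ ‖integralOneAddMulSqPow (n - 1) (4 * m⁻¹ - 1)‖ :=
        padic_norm_inv_mul_sum_centralBinom_le (by norm_num) hn _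
    _ ≤ max ‖(n : ℚ_[3])‖ (3 * ‖m - 1‖) := by
        simpa only [cast_n, norm_sub_three] using
          padic_norm_integralOneAddMulSqPow_le_max (n - 1) close

/-- Sun's conjecture (i), first part: for `m ≡ 1 (mod 3)` and `n ≥ 1`,
`ν₃((1/n)·∑_{k<n} C(2k,k)/m^k) ≥ min{ν₃(n), ν₃(m−1) − 1}` (with `ν₃(0) = ∞`),
expressed via the 3-adic norm in `ℚ_[3]`. -/
theorem stmt_3 (m : ℤ) (hm : m ≡ 1 [ZMOD 3]) (n : ℕ) (hn : 0 < n) (e : ℕ)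
    (he : (e : ℕ∞) ≤ min (padicValNat 3 n : ℕ∞) (emultiplicity (3 : ℤ) (m - 1) - 1)) :
    ‖((n : ℚ_[3]))⁻¹ * ∑ k ∈ Finset.range n,
        (Nat.choose (2 * k) k : ℚ_[3]) / (m : ℚ_[3]) ^ k‖ ≤ (3 : ℝ) ^ (-(e : ℤ)) := by
  have dvd_sub_one : (3 : ℤ) ∣ m - 1 := hm.symm.dvd
  exact (stmt_3_general (mod_cast Padic.norm_intCast_lt_one_iff.mpr dvd_sub_one) hn).trans
    (mod_cast max_padic_norm_le_of_le_min_valuation (p := 3) dvd_sub_one he)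
end

section
/- Let m ≡ 1 (mod 3), m ≠ 1, and let a ≥ ν₃(m−1) be an integer (with a ≥ 1). Then (1/3^a)·∑_{k=0}^{3^a−1} C(2k,k)/m^k ≡ (m−1)/3 (mod 3^{ν₃(m−1)}) as 3-adic integers. -/
/-!
Write `n = 3 ^ a`, `d = m - 1` and `x = m - 4 = d - 3`. Expanding the partial sums of
`∑ C(2k, k) / m ^ k` around `m = 4` gives, with `N = n - 1`,
`n⁻¹ * ∑ k < n, C(2k, k) / m ^ k = C(2n, n) / (2 * m ^ N) * ∫₀¹ (1 + x t (1 - t)) ^ N dt`.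
The first factor is congruent to `1` modulo `3` because `C(2n, n) ≡ 2`. Expanding the integral
in powers of `x`, its terms agree modulo `n` with those of `B n / n`, where
`B n = ∑ j, C(n + j, 2j + 1) x ^ j` is a Morgan-Voyce polynomial. These polynomials are a Lucas
sequence and satisfy `B (3n) = B n * (3 + x (x + 4) (B n) ^ 2)`, so that `B (3 ^ a) / 3 ^ a` is
constant modulo `d` for `a ≥ 1`; its value at `a = 1` is congruent to `d / 3`.
-/

open Finset Nat

section MorganVoyce

variable {R : Type*} [CommRing R]

/-- The Morgan-Voyce polynomial `B` evaluated at `x`, with the index shifted by one from the usual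
convention so that `morganVoyceB x n` is the `n`-th term of a Lucas sequence starting at `0, 1`. -/
def morganVoyceB (x : R) (n : ℕ) : R :=
  ∑ j ∈ range n, ((n + j).choose (2 * j + 1) : R) * x ^ j

/-- The companion Morgan-Voyce polynomial, usually written `b`, evaluated at `x`. -/
def morganVoyceLittleB (x : R) (n : ℕ) : R :=
  ∑ j ∈ range (n + 1), ((n + j).choose (2 * j) : R) * x ^ j

theorem morganVoyceB_succ (x : R) (n : ℕ) :
    morganVoyceB x (n + 1) = morganVoyceB x n + morganVoyceLittleB x n := by
  have extend : morganVoyceB x n =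
      ∑ j ∈ range (n + 1), ((n + j).choose (2 * j + 1) : R) * x ^ j := by
    rw [sum_range_succ, Nat.choose_eq_zero_of_lt (by lia : n + n < 2 * n + 1)]
    simp [morganVoyceB]
  rw [extend, morganVoyceB, morganVoyceLittleB, ← sum_add_distrib]
  refine sum_congr rfl fun j _ ↦ ?_
  rw [show n + 1 + j = n + j + 1 by ring, Nat.choose_succ_succ]
  push_cast
  ring

theorem morganVoyceLittleB_succ (x : R) (n : ℕ) :
    morganVoyceLittleB x (n + 1) = morganVoyceLittleB x n + x * morganVoyceB x (n + 1) := by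
  have extend : morganVoyceLittleB x n =
      ∑ j ∈ range (n + 1 + 1), ((n + j).choose (2 * j) : R) * x ^ j := by
    rw [sum_range_succ, Nat.choose_eq_zero_of_lt (by lia : n + (n + 1) < 2 * (n + 1))]
    simp [morganVoyceLittleB]
  have pascal (j : ℕ) : ((n + 1 + (j + 1)).choose (2 * (j + 1)) : R) =
      (n + 1 + j).choose (2 * j + 1) + (n + (j + 1)).choose (2 * (j + 1)) := by
    rw [show n + (j + 1) = n + 1 + j by ring]
    exact mod_cast congrArg (Nat.cast (R := R)) (Nat.choose_succ_succ' (n + 1 + j) (2 * j + 1))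
  rw [extend, morganVoyceB, morganVoyceLittleB, sum_range_succ', sum_range_succ' _ (n + 1),
    mul_sum, add_right_comm (∑ _ ∈ _, _), ← sum_add_distrib]
  congr 1
  · refine sum_congr rfl fun j _ ↦ ?_
    rw [pascal]
    ring
  · simp

theorem morganVoyceB_add_and_morganVoyceLittleB_add (x : R) (m n : ℕ) :
    morganVoyceB x (m + n) = morganVoyceB x m * morganVoyceLittleB x n +
        morganVoyceB x n * morganVoyceLittleB x m - x * morganVoyceB x m * morganVoyceB x n ∧
      morganVoyceLittleB x (m + n) = morganVoyceLittleB x m * morganVoyceLittleB x n +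
        x * morganVoyceB x m * morganVoyceB x n := by
  induction n with
  | zero => simp [morganVoyceB, morganVoyceLittleB]
  | succ n ih =>
    rw [← add_assoc, morganVoyceLittleB_succ x (m + n), morganVoyceB_succ x (m + n), ih.1, ih.2,
      morganVoyceLittleB_succ, morganVoyceB_succ]
    constructor <;> ring

theorem morganVoyceLittleB_sq_sub (x : R) (n : ℕ) :
    morganVoyceLittleB x n ^ 2 - x * morganVoyceB x n ^ 2 -
      x * morganVoyceB x n * morganVoyceLittleB x n = 1 := by
  induction n with
  | zero => simp [morganVoyceB, morganVoyceLittleB]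
  | succ n ih =>
    rw [morganVoyceLittleB_succ, morganVoyceB_succ, ← ih]
    ring

theorem morganVoyceB_three_mul (x : R) (n : ℕ) :
    morganVoyceB x (3 * n) = morganVoyceB x n * (3 + x * (x + 4) * morganVoyceB x n ^ 2) := by
  have double := morganVoyceB_add_and_morganVoyceLittleB_add x n n
  rw [show 3 * n = n + n + n by ring, (morganVoyceB_add_and_morganVoyceLittleB_add x _ n).1,
    double.1, double.2]
  linear_combination 3 * morganVoyceB x n * morganVoyceLittleB_sq_sub x n

theorem morganVoyceB_three_pow_succ_div {K : Type*} [Field K] [NeZero (3 : K)] (x : K) (a : ℕ) :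
    morganVoyceB x (3 ^ (a + 2)) / 3 ^ (a + 2) =
      morganVoyceB x (3 ^ (a + 1)) / 3 ^ (a + 1) +
        morganVoyceB x (3 ^ (a + 1)) / 3 ^ (a + 1) * 3 *
          (x * (x + 4) * 3 ^ (2 * a) * (morganVoyceB x (3 ^ (a + 1)) / 3 ^ (a + 1)) ^ 2) := by
  have three_ne_zero : (3 : K) ≠ 0 := NeZero.ne 3
  rw [pow_succ' 3 (a + 1), morganVoyceB_three_mul]
  field_simp
  ring

end MorganVoyce

section Factorial

theorem factorial_two_mul_add_one (j : ℕ) :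
    (2 * j + 1)! = (2 * j + 1) * centralBinom j * j ! ^ 2 := by
  have := Nat.choose_mul_factorial_mul_factorial (n := 2 * j) (k := j) (by lia)
  rw [show 2 * j - j = j by lia] at this
  rw [Nat.factorial_succ, ← this, centralBinom]
  ring

theorem choose_mul_factorial_eq_mul_ascFactorial (N j : ℕ) :
    (N + 1 + j).choose (2 * j + 1) * (2 * j + 1)! =
      (N + 1) * N.choose j * j ! * (N + 1 + 1).ascFactorial j := by
  have split := Nat.descFactorial_mul_descFactorial
    (n := N + 1 + j) (k := j) (m := 2 * j + 1) (by lia)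
  rw [Nat.add_sub_cancel, show 2 * j + 1 - j = j + 1 by lia, Nat.succ_descFactorial_succ,
    Nat.add_descFactorial_eq_ascFactorial] at split
  rw [mul_comm, ← Nat.descFactorial_eq_factorial_mul_choose, ← split,
    Nat.descFactorial_eq_factorial_mul_choose N]
  ring

theorem ascFactorial_modEq_factorial (n j : ℕ) : (n + 1).ascFactorial j ≡ j ! [MOD n] := by
  induction j with
  | zero => rfl
  | succ j ih =>
    rw [Nat.ascFactorial_succ, Nat.factorial_succ]
    refine Nat.ModEq.mul ?_ ih
    simp [Nat.ModEq, add_assoc, add_comm 1 j]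

end Factorial

section BetaSum

variable {K : Type*} [Field K]

/-- The value of `∫₀¹ (1 + x t (1 - t)) ^ N dt`, expanded in powers of `x` by means of the Beta
integrals `∫₀¹ (t (1 - t)) ^ j dt = 1 / ((2j + 1) C(2j, j))`; it makes sense over any field of
characteristic zero. -/
def betaSum (x : K) (N : ℕ) : K :=
  ∑ j ∈ range (N + 1), (N.choose j : K) * x ^ j / ((2 * j + 1) * centralBinom j)

variable [CharZero K]

theorem betaSum_coeff_succ (N j : ℕ) :
    2 * (2 * N + 3) *
        ((N + 1).choose (j + 1) / ((2 * (j + 1 : ℕ) + 1) * centralBinom (j + 1)) : K) =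
      (N + 1) * (N.choose j / ((2 * j + 1) * centralBinom j) +
        4 * (N.choose (j + 1) / ((2 * (j + 1 : ℕ) + 1) * centralBinom (j + 1)))) := by
  have hrec : ((j : K) + 1) * centralBinom (j + 1) = 2 * ((2 * j + 1) * centralBinom j) := by
    exact_mod_cast (succ_mul_centralBinom_succ j).trans (mul_assoc _ _ _)
  have absorb : ((N : K) + 1) * N.choose j = (N + 1).choose (j + 1) * (j + 1) := by
    exact_mod_cast Nat.add_one_mul_choose_eq N j
  have pascal : ((N + 1).choose (j + 1) : K) = N.choose j + N.choose (j + 1) := by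
    exact_mod_cast Nat.choose_succ_succ N j
  have hc : (centralBinom (j + 1) : K) ≠ 0 := mod_cast centralBinom_ne_zero _
  have hj : (j : K) + 1 ≠ 0 := by exact_mod_cast j.succ_ne_zero
  have hj3 : 2 * ((j : K) + 1) + 1 ≠ 0 := by exact_mod_cast (2 * (j + 1)).succ_ne_zero
  rw [show (2 * (j : K) + 1) * centralBinom j = (j + 1) * centralBinom (j + 1) / 2 by
    rw [hrec]; ring, Nat.cast_succ]
  field_simp
  linear_combination 4 * (N + 1) * (j + 1) * pascal - 2 * absorb

theorem betaSum_succ (x : K) (N : ℕ) :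
    2 * (2 * N + 3) * betaSum x (N + 1) = (N + 1) * (x + 4) * betaSum x N + 2 := by
  have split_succ : betaSum x (N + 1) = ∑ j ∈ range (N + 1), ((N + 1).choose (j + 1) : K) *
      x ^ (j + 1) / ((2 * (j + 1 : ℕ) + 1) * centralBinom (j + 1)) + 1 := by
    rw [betaSum, sum_range_succ']
    simp
  have split : betaSum x N = ∑ j ∈ range (N + 1), (N.choose (j + 1) : K) *
      x ^ (j + 1) / ((2 * (j + 1 : ℕ) + 1) * centralBinom (j + 1)) + 1 := by
    have := sum_range_succ
      (fun j ↦ (N.choose j : K) * x ^ j / ((2 * j + 1) * centralBinom j)) (N + 1)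
    rw [sum_range_succ'] at this
    simpa [betaSum] using this.symm
  have compare : 2 * (2 * (N : K) + 3) * ∑ j ∈ range (N + 1), ((N + 1).choose (j + 1) : K) *
        x ^ (j + 1) / ((2 * (j + 1 : ℕ) + 1) * centralBinom (j + 1)) =
      (N + 1) * (x * betaSum x N + 4 * ∑ j ∈ range (N + 1), (N.choose (j + 1) : K) *
        x ^ (j + 1) / ((2 * (j + 1 : ℕ) + 1) * centralBinom (j + 1))) := by
    simp only [betaSum, mul_sum, ← sum_add_distrib]
    refine sum_congr rfl fun j _ ↦ ?_
    linear_combination x ^ (j + 1) * betaSum_coeff_succ (K := K) N j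
  linear_combination compare + 2 * (2 * (N : K) + 3) * split_succ - 4 * ((N : K) + 1) * split

theorem sum_centralBinom_mul_pow (x : K) (N : ℕ) :
    ∑ k ∈ range (N + 1), (centralBinom k : K) * (x + 4) ^ (N - k) =
      (2 * N + 1) * centralBinom N * betaSum x N := by
  induction N with
  | zero => simp [betaSum]
  | succ N ih =>
    have horner : ∑ k ∈ range (N + 1), (centralBinom k : K) * (x + 4) ^ (N + 1 - k) =
        (x + 4) * ∑ k ∈ range (N + 1), (centralBinom k : K) * (x + 4) ^ (N - k) := by
      rw [mul_sum]
      refine sum_congr rfl fun k hk ↦ ?_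
      rw [Nat.succ_sub (mem_range_succ_iff.mp hk), pow_succ]
      ring
    have hrec : ((N : K) + 1) * centralBinom (N + 1) = 2 * (2 * N + 1) * centralBinom N := by
      exact_mod_cast succ_mul_centralBinom_succ N
    rw [sum_range_succ, horner, ih, Nat.sub_self, pow_zero, mul_one]
    push_cast
    linear_combination -(centralBinom (N + 1) / 2 : K) * betaSum_succ x N -
      (x + 4) * betaSum x N / 2 * hrec

theorem inv_mul_sum_centralBinom_div_pow {y : K} (hy : y ≠ 0) {n : ℕ} (hn : n ≠ 0) :
    (n : K)⁻¹ * ∑ k ∈ range n, (centralBinom k : K) / y ^ k =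
      centralBinom n / (2 * y ^ (n - 1)) * betaSum (y - 4) (n - 1) := by
  obtain ⟨N, rfl⟩ := Nat.exists_eq_add_one_of_ne_zero hn
  have hrec : ((N : K) + 1) * centralBinom (N + 1) = 2 * (2 * N + 1) * centralBinom N := by
    exact_mod_cast succ_mul_centralBinom_succ N
  have clear_denominators : y ^ N * ∑ k ∈ range (N + 1), (centralBinom k : K) / y ^ k =
      (2 * N + 1) * centralBinom N * betaSum (y - 4) N := by
    rw [← sum_centralBinom_mul_pow, sub_add_cancel, mul_sum]
    refine sum_congr rfl fun k hk ↦ ?_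
    rw [pow_sub₀ y hy (mem_range_succ_iff.mp hk)]
    ring
  have hN : (N : K) + 1 ≠ 0 := by exact_mod_cast N.succ_ne_zero
  rw [Nat.add_sub_cancel]
  push_cast
  field_simp
  linear_combination 2 * clear_denominators - betaSum (y - 4) N * hrec

theorem betaSum_sub_morganVoyceB_div (x : K) (N : ℕ) :
    betaSum x N - morganVoyceB x (N + 1) / (N + 1 : ℕ) =
      ∑ j ∈ range (N + 1), (N.choose j * j ! : ℕ) * (x ^ j / (2 * j + 1)!) *
        ((j ! : K) - (N + 1 + 1).ascFactorial j) := by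
  rw [betaSum, morganVoyceB, sum_div, ← sum_sub_distrib]
  refine sum_congr rfl fun j _ ↦ ?_
  have hfac : ((2 * j + 1)! : K) = (2 * j + 1) * centralBinom j * j ! ^ 2 := by
    exact_mod_cast factorial_two_mul_add_one j
  have hchoose : ((N + 1 + j).choose (2 * j + 1) : K) * (2 * j + 1)! =
      (N + 1 : ℕ) * N.choose j * j ! * (N + 1 + 1).ascFactorial j := by
    exact_mod_cast choose_mul_factorial_eq_mul_ascFactorial N j
  have hfac0 : ((2 * j + 1)! : K) ≠ 0 := mod_cast Nat.factorial_ne_zero _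
  have hN : ((N + 1 : ℕ) : K) ≠ 0 := mod_cast N.succ_ne_zero
  have beta_term : (N.choose j * x ^ j / ((2 * j + 1) * centralBinom j) : K) =
      N.choose j * x ^ j * j ! ^ 2 / (2 * j + 1)! := by
    rw [hfac, mul_div_mul_right _ _ (pow_ne_zero 2 (mod_cast Nat.factorial_ne_zero j))]
  have morganVoyce_term : ((N + 1 + j).choose (2 * j + 1) * x ^ j / (N + 1 : ℕ) : K) =
      N.choose j * x ^ j * j ! * (N + 1 + 1).ascFactorial j / (2 * j + 1)! := by
    rw [div_eq_div_iff hN hfac0]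
    linear_combination x ^ j * hchoose
  rw [beta_term, morganVoyce_term, Nat.cast_mul]
  ring

end BetaSum

section Padic

variable {p : ℕ} [hp : Fact p.Prime]

theorem padicValNat_factorial_two_mul_add_one_le (hp2 : p ≠ 2) (j : ℕ) :
    padicValNat p (2 * j + 1)! ≤ j := by
  have legendre := sub_one_mul_padicValNat_factorial_lt_of_ne_zero (p := p) (2 * j).succ_ne_zero
  have two_le : 2 ≤ p - 1 := by have := hp.out.two_le; lia
  have := Nat.mul_le_mul_right (padicValNat p (2 * j + 1)!) two_le
  lia

theorem norm_pow_div_factorial_le_one (hp2 : p ≠ 2) {x : ℚ_[p]} (hx : ‖x‖ ≤ (p : ℝ)⁻¹) (j : ℕ) :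
    ‖x ^ j / ((2 * j + 1)! : ℕ)‖ ≤ 1 := by
  have hfac : (((2 * j + 1)! : ℕ) : ℚ_[p]) ≠ 0 := mod_cast Nat.factorial_ne_zero _
  have one_le : (1 : ℝ) ≤ p := mod_cast hp.out.one_le
  rw [norm_div, norm_pow, div_le_one (norm_pos_iff.mpr hfac)]
  calc ‖x‖ ^ j ≤ (p : ℝ)⁻¹ ^ j := by gcongr
    _ ≤ (p : ℝ)⁻¹ ^ padicValNat p (2 * j + 1)! :=
      pow_le_pow_of_le_one (by positivity) (inv_le_one_of_one_le₀ one_le)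
        (padicValNat_factorial_two_mul_add_one_le hp2 j)
    _ = ‖(((2 * j + 1)! : ℕ) : ℚ_[p])‖ := by
      rw [Padic.norm_eq_zpow_neg_valuation hfac, Padic.valuation_natCast, zpow_neg, zpow_natCast,
        inv_pow]

theorem norm_natCast_sub_natCast_le_of_modEq {n k l : ℕ} (h : k ≡ l [MOD n]) :
    ‖(k - l : ℚ_[p])‖ ≤ ‖(n : ℚ_[p])‖ := by
  obtain ⟨c, hc⟩ := h.symm.dvd
  have : (k - l : ℚ_[p]) = n * (c : ℤ) := mod_cast hc
  rw [this, norm_mul]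
  exact mul_le_of_le_one_right (norm_nonneg _) (Padic.norm_int_le_one c)

theorem norm_centralBinom_prime_pow_sub_two_le (a : ℕ) :
    ‖(centralBinom (p ^ a) - 2 : ℚ_[p])‖ ≤ (p : ℝ)⁻¹ := by
  have lucas : centralBinom (p ^ a) ≡ 2 [MOD p] := by
    simpa [centralBinom, mul_comm] using
      Choose.choose_pow_mul_pow_mul_modEq_choose_nat (p := p) (a := 2) (b := 1) (k := a)
  simpa using norm_natCast_sub_natCast_le_of_modEq (p := p) lucas

theorem norm_pow_sub_one_le {K : Type*} [NormedField K] [IsUltrametricDist K] {x : K}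
    (hx : ‖x‖ ≤ 1) (n : ℕ) : ‖x ^ n - 1‖ ≤ ‖x - 1‖ := by
  rw [← mul_geom_sum, norm_mul]
  refine mul_le_of_le_one_right (norm_nonneg _) ?_
  refine IsUltrametricDist.norm_sum_le_of_forall_le_of_nonneg zero_le_one fun i _ ↦ ?_
  rw [norm_pow]
  exact pow_le_one₀ (norm_nonneg _) hx

theorem norm_centralBinom_prime_pow_div_sub_one_le (hp2 : p ≠ 2) {m : ℚ_[p]}
    (hm : ‖m - 1‖ ≤ (p : ℝ)⁻¹) (a N : ℕ) :
    ‖centralBinom (p ^ a) / (2 * m ^ N) - 1‖ ≤ (p : ℝ)⁻¹ := by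
  have norm_two : ‖(2 : ℚ_[p])‖ = 1 := by
    exact_mod_cast Padic.norm_natCast_eq_one_iff.mpr
      ((Nat.coprime_primes hp.out Nat.prime_two).mpr hp2)
  have norm_m : ‖m‖ = 1 := by
    have inv_lt_one : (p : ℝ)⁻¹ < 1 := inv_lt_one_of_one_lt₀ (mod_cast hp.out.one_lt)
    rw [← norm_one (α := ℚ_[p])]
    exact Padic.norm_eq_of_norm_sub_lt_right (by rw [norm_one]; exact hm.trans_lt inv_lt_one)
  have norm_denom : ‖2 * m ^ N‖ = 1 := by simp [norm_two, norm_m]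
  have denom_ne_zero : 2 * m ^ N ≠ 0 := norm_ne_zero_iff.mp (norm_denom.trans_ne one_ne_zero)
  rw [div_sub_one denom_ne_zero, norm_div, norm_denom, div_one,
    show centralBinom (p ^ a) - 2 * m ^ N = (centralBinom (p ^ a) - 2) + -(2 * (m ^ N - 1)) by ring]
  refine (Padic.nonarchimedean _ _).trans
    (max_le (norm_centralBinom_prime_pow_sub_two_le a) ?_)
  rw [norm_neg, norm_mul, norm_two, one_mul]
  exact (norm_pow_sub_one_le norm_m.le N).trans hm

theorem norm_mul_sub_le_of_norm_sub_one_le {c w t : ℚ_[p]} {r : ℝ} (hc : ‖c - 1‖ ≤ (p : ℝ)⁻¹)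
    (hw : ‖w - t‖ ≤ r) (ht : ‖t‖ ≤ p * r) : ‖c * w - t‖ ≤ r := by
  have one_le : (1 : ℝ) ≤ p := mod_cast hp.out.one_le
  have norm_w : ‖w‖ ≤ p * r := by
    rw [← sub_add_cancel w t]
    have r_nonneg : 0 ≤ r := (norm_nonneg _).trans hw
    exact (Padic.nonarchimedean _ _).trans
      (max_le (hw.trans (le_mul_of_one_le_left r_nonneg one_le)) ht)
  rw [show c * w - t = (c - 1) * w + (w - t) by ring]
  refine (Padic.nonarchimedean _ _).trans (max_le ?_ hw)
  calc ‖(c - 1) * w‖ ≤ (p : ℝ)⁻¹ * (p * r) := by rw [norm_mul]; gcongr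
    _ = r := by field_simp

theorem norm_betaSum_sub_morganVoyceB_div_le (hp2 : p ≠ 2) {x : ℚ_[p]} (hx : ‖x‖ ≤ (p : ℝ)⁻¹)
    {n : ℕ} (hn : n ≠ 0) :
    ‖betaSum x (n - 1) - morganVoyceB x n / n‖ ≤ ‖(n : ℚ_[p])‖ := by
  obtain ⟨N, rfl⟩ := Nat.exists_eq_add_one_of_ne_zero hn
  rw [Nat.add_sub_cancel, betaSum_sub_morganVoyceB_div]
  refine IsUltrametricDist.norm_sum_le_of_forall_le_of_nonneg (norm_nonneg _) fun j _ ↦ ?_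
  have integral : ‖((N.choose j * j ! : ℕ) : ℚ_[p]) * (x ^ j / (2 * j + 1)!)‖ ≤ 1 := by
    rw [norm_mul]
    exact mul_le_one₀ (IsUltrametricDist.norm_natCast_le_one _ _) (norm_nonneg _)
      (norm_pow_div_factorial_le_one hp2 hx j)
  rw [norm_mul]
  exact (mul_le_of_le_one_left (norm_nonneg _) integral).trans
    (norm_natCast_sub_natCast_le_of_modEq (ascFactorial_modEq_factorial (N + 1) j).symm)

end Padic

section ThreeAdic

theorem norm_three : ‖(3 : ℚ_[3])‖ = 3⁻¹ := by
  simpa using Padic.norm_p (p := 3)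

theorem norm_div_three (d : ℚ_[3]) : ‖d / 3‖ = 3 * ‖d‖ := by
  rw [norm_div, norm_three, div_inv_eq_mul, mul_comm]

theorem norm_morganVoyceB_three_pow_div_sub_le {m : ℚ_[3]} (hm : ‖m - 1‖ ≤ 3⁻¹) (a : ℕ) :
    ‖morganVoyceB (m - 4) (3 ^ (a + 1)) / 3 ^ (a + 1) - (m - 1) / 3‖ ≤ ‖m - 1‖ := by
  have target_mem : (m - 1) / 3 ∈ PadicInt.subring 3 := by
    rw [PadicInt.mem_subring_iff, norm_div_three]
    linarith
  induction a with
  | zero =>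
    have triple : morganVoyceB (m - 4) 3 = 3 + (m - 4) * (m - 4 + 4) := by
      simpa [morganVoyceB] using morganVoyceB_three_mul (m - 4) 1
    have base : morganVoyceB (m - 4) (3 ^ (0 + 1)) / 3 ^ (0 + 1) - (m - 1) / 3 =
        (m - 1) * ((m - 1) / 3 - 1) := by
      rw [zero_add, pow_one, pow_one, triple]
      ring
    rw [base, norm_mul]
    exact mul_le_of_le_one_right (norm_nonneg _) (sub_mem target_mem (one_mem _))
  | succ a ih =>
    rw [morganVoyceB_three_pow_succ_div, add_sub_right_comm, sub_add_cancel]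
    set w := morganVoyceB (m - 4) (3 ^ (a + 1)) / 3 ^ (a + 1)
    have norm_w : ‖w‖ ≤ 3 * ‖m - 1‖ := by
      rw [← sub_add_cancel w ((m - 1) / 3)]
      refine (Padic.nonarchimedean _ _).trans (max_le ?_ (norm_div_three _).le)
      linarith [norm_nonneg (m - 1)]
    have integral : (m - 4) * m * 3 ^ (2 * a) * w ^ 2 ∈ PadicInt.subring 3 := by
      have sub_one_mem : m - 1 ∈ PadicInt.subring 3 :=
        (PadicInt.mem_subring_iff _).mpr (by linarith)
      have m_mem : m ∈ PadicInt.subring 3 := by simpa using add_mem sub_one_mem (one_mem _)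
      have w_mem : w ∈ PadicInt.subring 3 := (PadicInt.mem_subring_iff _).mpr (by linarith)
      exact mul_mem (mul_mem (mul_mem (sub_mem m_mem (ofNat_mem _ 4)) m_mem)
        (pow_mem (ofNat_mem _ 3) _)) (pow_mem w_mem 2)
    refine (Padic.nonarchimedean _ _).trans (max_le ih ?_)
    rw [norm_mul, norm_mul, norm_three]
    refine (mul_le_of_le_one_right (by positivity) integral).trans ?_
    linarith

theorem norm_betaSum_three_pow_sub_le {m : ℚ_[3]} (hm : ‖m - 1‖ ≤ 3⁻¹) (a : ℕ) :
    ‖betaSum (m - 4) (3 ^ a - 1) - (m - 1) / 3‖ ≤ max ‖m - 1‖ (3 ^ a)⁻¹ := by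
  rcases a with _ | a
  · have integral : 1 - (m - 1) / 3 ∈ PadicInt.subring 3 := by
      refine sub_mem (one_mem _) ?_
      rw [PadicInt.mem_subring_iff, norm_div_three]
      linarith
    simpa [betaSum] using Or.inr integral
  · have norm_sub_four : ‖m - 4‖ ≤ ((3 : ℕ) : ℝ)⁻¹ := by
      rw [show m - 4 = m - 1 + -3 by ring]
      refine (Padic.nonarchimedean _ _).trans (max_le hm ?_)
      rw [norm_neg, norm_three, Nat.cast_ofNat]
    have compare : ‖betaSum (m - 4) (3 ^ (a + 1) - 1) -
        morganVoyceB (m - 4) (3 ^ (a + 1)) / 3 ^ (a + 1)‖ ≤ (3 ^ (a + 1))⁻¹ := by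
      simpa only [Nat.cast_pow, Nat.cast_ofNat, norm_pow, norm_three, inv_pow] using
        norm_betaSum_sub_morganVoyceB_div_le (by norm_num) norm_sub_four
          (pow_ne_zero (a + 1) three_ne_zero)
    rw [← sub_add_sub_cancel, max_comm]
    exact (Padic.nonarchimedean _ _).trans
      (max_le_max compare (norm_morganVoyceB_three_pow_div_sub_le hm a))

end ThreeAdic

theorem stmt_4_general (m : ℚ_[3]) (hm : ‖m - 1‖ ≤ 3⁻¹) (a : ℕ) :
    ‖((3 : ℚ_[3]) ^ a)⁻¹ * (∑ k ∈ Finset.range (3 ^ a), (Nat.choose (2 * k) k : ℚ_[3]) / m ^ k) -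
        (m - 1) / 3‖ ≤ max ‖m - 1‖ (3 ^ a)⁻¹ := by
  have hm0 : m ≠ 0 := by
    rintro rfl
    norm_num at hm
  have factor : ((3 : ℚ_[3]) ^ a)⁻¹ * ∑ k ∈ range (3 ^ a), ((2 * k).choose k : ℚ_[3]) / m ^ k =
      centralBinom (3 ^ a) / (2 * m ^ (3 ^ a - 1)) * betaSum (m - 4) (3 ^ a - 1) := by
    simpa only [Nat.cast_pow, Nat.cast_ofNat, centralBinom] using
      inv_mul_sum_centralBinom_div_pow hm0 (pow_ne_zero a three_ne_zero)
  rw [factor]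
  refine norm_mul_sub_le_of_norm_sub_one_le (p := 3) ?_ (norm_betaSum_three_pow_sub_le hm a) ?_
  · exact norm_centralBinom_prime_pow_div_sub_one_le (by norm_num) (mod_cast hm) a _
  · rw [norm_div_three, Nat.cast_ofNat]
    gcongr
    exact le_max_left _ _

/-- Sun's conjecture (i), second part: for `m ≡ 1 (mod 3)`, `m ≠ 1`, and
`a ≥ ν₃(m−1)` (with `a ≥ 1`), one has
`(1/3^a)·∑_{k<3^a} C(2k,k)/m^k ≡ (m−1)/3 (mod 3^{ν₃(m−1)})` as 3-adic numbers. -/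
theorem stmt_4 (m : ℤ) (hm : m ≡ 1 [ZMOD 3]) (hm1 : m ≠ 1) (a : ℕ)
    (ha1 : 1 ≤ a) (ha : padicValInt 3 (m - 1) ≤ a) :
    ‖((3 : ℚ_[3]) ^ a)⁻¹ * (∑ k ∈ Finset.range (3 ^ a),
          (Nat.choose (2 * k) k : ℚ_[3]) / (m : ℚ_[3]) ^ k) -
        ((m : ℚ_[3]) - 1) / 3‖ ≤ (3 : ℝ) ^ (-(padicValInt 3 (m - 1) : ℤ)) := by
  have norm_sub_one : ‖(m - 1 : ℚ_[3])‖ = (3 : ℝ) ^ (-(padicValInt 3 (m - 1) : ℤ)) := by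
    have hm0 : ((m - 1 : ℤ) : ℚ_[3]) ≠ 0 := mod_cast sub_ne_zero.mpr hm1
    simpa [← Padic.valuation_intCast (p := 3)] using Padic.norm_eq_zpow_neg_valuation hm0
  have norm_le : ‖(m - 1 : ℚ_[3])‖ ≤ 3⁻¹ := by
    simpa using (Padic.norm_int_le_pow_iff_dvd (p := 3) (m - 1) 1).mpr (by simpa using hm.symm.dvd)
  refine (stmt_4_general m norm_le a).trans (max_le norm_sub_one.le ?_)
  rw [zpow_neg, zpow_natCast]
  gcongr
  norm_num
end

section
/- Let m ≡ 1 (mod 3), m ≠ 1, and let a > ν₃(m−1) be an integer. Then (1/3^a)·∑_{k=0}^{3^a−1} (−1)^k·C(3^a−1,k)·C(2k,k)/m^k ≡ −(m−1)/3 (mod 3^{ν₃(m−1)}) as 3-adic numbers. -/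
/-! Put `z = 4 - m`, which is divisible by `3`. The trinomial identity
`(m * X + (1 - X) ^ 2) ^ N = ((m - 4) * X + (1 + X) ^ 2) ^ N` with `N = 3 ^ a - 1` turns the sum
into `C(2N, N) / m ^ N` times a polynomial in `z`, whose coefficients are `3`-adically close to
`1 / ((2j + 1) C(2j, j))`. These are the Taylor coefficients of `F(z) = 2θ / sin 2θ` in
`z = 4 sin² θ`. Triplication `θ ↦ 3θ` sends `z` to `w = z (3 - z) ^ 2 = z (m - 1) ^ 2`, which is
divisible by `27`, so `F(w) ≡ 1 (mod 3)`, and `3 F(z) = (z - 1) (z - 3) F(w)` gives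
`F(z) ≡ (m - 1) / 3 (mod m - 1)`. Finally `C(2N, N) / 3 ^ a ≡ -1 (mod 3)`. -/

open Finset Polynomial

section BinomialSums

variable {R : Type*} [CommRing R]

theorem coeff_C_mul_X_add_sq_pow (b c : R) (N : ℕ) :
    ((C b * X + (1 + C c * X) ^ 2) ^ N).coeff N =
      ∑ k ∈ range (N + 1), c ^ k * N.choose k * k.centralBinom * b ^ (N - k) := by
  rw [add_comm, add_pow, finsetSum_coeff]
  refine sum_congr rfl fun k hk => ?_
  have hkN : k ≤ N := mem_range_succ_iff.1 hk
  have hcoeff : ((1 + C c * X) ^ (2 * k)).coeff k = k.centralBinom * c ^ k := by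
    have hcomp : (1 + C c * X) ^ (2 * k) = ((1 + X) ^ (2 * k)).comp (C c * X) := by simp
    rw [hcomp, comp_C_mul_X_coeff, coeff_one_add_X_pow, Nat.centralBinom]
  have hterm : ((1 + C c * X) ^ 2) ^ k * (C b * X) ^ (N - k) * (N.choose k : R[X]) =
      C (N.choose k * b ^ (N - k)) * ((1 + C c * X) ^ (2 * k) * X ^ (N - k)) := by
    simp only [C_mul, C_pow, map_natCast, pow_mul, mul_pow]
    ring
  rw [hterm, coeff_C_mul, coeff_mul_X_pow', if_pos (N.sub_le k), Nat.sub_sub_self hkN, hcoeff]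
  ring

-- Both sides are the coefficient of `X ^ N` in `(x * X + (1 + X) ^ 2) ^ N`, since
-- `(1 + X) ^ 2 = 4 * X + (1 - X) ^ 2`.
theorem sum_choose_mul_centralBinom_mul_add_four_pow (x : R) (N : ℕ) :
    ∑ k ∈ range (N + 1), (-1) ^ k * N.choose k * k.centralBinom * (x + 4) ^ (N - k) =
      ∑ k ∈ range (N + 1), N.choose k * k.centralBinom * x ^ (N - k) := by
  have hbase : C (x + 4) * X + (1 + C (-1) * X) ^ 2 = C x * X + (1 + C 1 * X) ^ 2 := by
    simp only [C_add, C_neg, C_1, C_ofNat]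
    ring
  have hcoeff := congrArg (fun q : R[X] => (q ^ N).coeff N) hbase
  simpa only [coeff_C_mul_X_add_sq_pow, one_pow, one_mul] using hcoeff

end BinomialSums

section ArcsinCoeff

variable (K : Type*) [Field K]

/-- The coefficient of `z ^ j` in the Taylor series of `2θ / sin 2θ` in the variable
`z = 4 sin² θ`. -/
noncomputable def arcsinCoeff (j : ℕ) : K :=
  (((2 * j + 1) * j.centralBinom : ℕ) : K)⁻¹

@[simp]
theorem arcsinCoeff_zero : arcsinCoeff K 0 = 1 := by
  simp [arcsinCoeff]

/-- The truncation to degree less than `J` of the Taylor series of `2θ / sin 2θ` in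
`z = 4 sin² θ`. -/
noncomputable def arcsinPoly (J : ℕ) : K[X] :=
  ∑ j ∈ range J, C (arcsinCoeff K j) * X ^ j

theorem eval_arcsinPoly (J : ℕ) (x : K) :
    (arcsinPoly K J).eval x = ∑ j ∈ range J, arcsinCoeff K j * x ^ j := by
  simp [arcsinPoly, eval_finsetSum]

/-- The sign-corrected ratio of the `j`-th coefficient of `∑ C(N, j) C(2(N-j), N-j) X ^ j`,
normalized to have constant term `1`, to `arcsinCoeff K j`. It is `p`-adically close to `1` when
`N + 1` is a large power of `p`. -/
noncomputable def binomRatio (N j : ℕ) : K :=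
  (-1) ^ j * N.choose j * (N - j).centralBinom / (N.centralBinom * arcsinCoeff K j)

variable {K} [CharZero K]

theorem arcsinCoeff_ne_zero (j : ℕ) : arcsinCoeff K j ≠ 0 :=
  inv_ne_zero (Nat.cast_ne_zero.2 (mul_ne_zero (by lia) j.centralBinom_ne_zero))

theorem arcsinCoeff_succ (j : ℕ) :
    (4 * (j + 1 : ℕ) + 2) * arcsinCoeff K (j + 1) = (j + 1) * arcsinCoeff K j := by
  have hdenom (i : ℕ) : (((2 * i + 1) * i.centralBinom : ℕ) : K) ≠ 0 :=
    Nat.cast_ne_zero.2 (mul_ne_zero (by lia) i.centralBinom_ne_zero)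
  have hrec : (j + 1 : K) * (j + 1).centralBinom = 2 * (2 * j + 1) * j.centralBinom := by
    exact_mod_cast j.succ_mul_centralBinom_succ
  rw [arcsinCoeff, arcsinCoeff, ← div_eq_mul_inv, ← div_eq_mul_inv,
    div_eq_div_iff (hdenom _) (hdenom _)]
  push_cast
  linear_combination -(2 * j + 3) * hrec

@[simp]
theorem binomRatio_zero (N : ℕ) : binomRatio K N 0 = 1 := by
  simp [binomRatio, N.centralBinom_ne_zero]

theorem choose_succ_mul_centralBinom (r j : ℕ) :
    (j + 1 + r).choose (j + 1) * r.centralBinom * ((j + 1) * (2 * (2 * r + 1))) =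
      (j + 1 + r).choose j * (r + 1).centralBinom * (r + 1) ^ 2 := by
  have hchoose := Nat.choose_succ_right_eq (j + 1 + r) j
  rw [show j + 1 + r - j = r + 1 by lia] at hchoose
  linear_combination 2 * (2 * r + 1) * r.centralBinom * hchoose -
    (j + 1 + r).choose j * (r + 1) * r.succ_mul_centralBinom_succ

theorem binomRatio_succ {N j : ℕ} (hj : j < N) :
    binomRatio K N (j + 1) = binomRatio K N j *
      ((1 - (N + 1 : ℕ) / (j + 1 : ℕ) : K) ^ 2 *
        (1 - 2 * ((N + 1 : ℕ) / (2 * j + 3 : ℕ)) : K)⁻¹) := by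
  obtain ⟨r, rfl⟩ : ∃ r, N = j + 1 + r := Nat.exists_eq_add_of_le hj
  have hj1 : (j + 1 : K) ≠ 0 := by exact_mod_cast j.succ_ne_zero
  have hj3 : (2 * j + 3 : K) ≠ 0 := by exact_mod_cast (2 * j + 2).succ_ne_zero
  have hr : (2 * r + 1 : K) ≠ 0 := by exact_mod_cast (2 * r).succ_ne_zero
  have hsq : (1 - (j + 1 + r + 1 : ℕ) / (j + 1 : ℕ) : K) ^ 2 = (r + 1) ^ 2 / (j + 1) ^ 2 := by
    push_cast
    field_simp
    ring
  have hinv : (1 - 2 * ((j + 1 + r + 1 : ℕ) / (2 * j + 3 : ℕ)) : K) =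
      -(2 * r + 1) / (2 * j + 3) := by
    push_cast
    field_simp
    ring
  have hbinom : ((j + 1 + r).choose (j + 1) * r.centralBinom : K) =
      (j + 1 + r).choose j * (r + 1).centralBinom * (r + 1) ^ 2 /
        ((j + 1) * (2 * (2 * r + 1))) := by
    rw [eq_div_iff (mul_ne_zero hj1 (mul_ne_zero two_ne_zero hr))]
    exact_mod_cast choose_succ_mul_centralBinom r j
  have hcoeff : arcsinCoeff K (j + 1) = (j + 1) * arcsinCoeff K j / (2 * (2 * j + 3)) := by
    rw [eq_div_iff (mul_ne_zero two_ne_zero hj3), ← arcsinCoeff_succ]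
    push_cast
    ring
  have hN : ((j + 1 + r).centralBinom : K) ≠ 0 := Nat.cast_ne_zero.2 (Nat.centralBinom_ne_zero _)
  have hf := arcsinCoeff_ne_zero (K := K) j
  rw [hsq, hinv, binomRatio, binomRatio, Nat.add_sub_cancel_left,
    show j + 1 + r - j = r + 1 by lia, mul_assoc ((-1) ^ (j + 1)), hbinom, hcoeff]
  field_simp
  ring

theorem sum_div_pow_eq_sum_arcsinCoeff {m : K} (hm : m ≠ 0) (N : ℕ) :
    ∑ k ∈ range (N + 1), (-1) ^ k * (N.choose k : K) * ((2 * k).choose k : K) / m ^ k =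
      N.centralBinom / m ^ N *
        ∑ j ∈ range (N + 1), arcsinCoeff K j * binomRatio K N j * (4 - m) ^ j := by
  have hterm (k) (hk : k ∈ range (N + 1)) :
      (-1) ^ k * (N.choose k : K) * ((2 * k).choose k : K) / m ^ k =
        (-1) ^ k * N.choose k * k.centralBinom * (m - 4 + 4) ^ (N - k) / m ^ N := by
    rw [sub_add_cancel, pow_sub₀ _ hm (mem_range_succ_iff.1 hk), Nat.centralBinom]
    field_simp
  rw [sum_congr rfl hterm, ← sum_div, sum_choose_mul_centralBinom_mul_add_four_pow, ← sum_flip,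
    div_mul_eq_mul_div, mul_sum]
  congr 1
  refine sum_congr rfl fun j hj => ?_
  have hjN : j ≤ N := mem_range_succ_iff.1 hj
  have hsign : (m - 4) ^ j = (-1) ^ j * (4 - m) ^ j := by rw [← mul_pow]; ring
  have hN : (N.centralBinom : K) ≠ 0 := Nat.cast_ne_zero.2 N.centralBinom_ne_zero
  have hf := arcsinCoeff_ne_zero (K := K) j
  rw [Nat.choose_symm hjN, Nat.sub_sub_self hjN, hsign, binomRatio]
  field_simp

end ArcsinCoeff

section TripleAngle

section CommRing

variable {R : Type*} [CommRing R]

variable (R) in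
/-- The differential operator `z (4 - z) d/dz + (2 - z)`. In the variable `z = 4 sin² θ` it maps
`2θ / sin 2θ` to the constant `2`. -/
noncomputable def arcsinOp : R[X] →ₗ[R] R[X] :=
  LinearMap.mulLeft R (X * (4 - X)) ∘ₗ derivative + LinearMap.mulLeft R (2 - X)

theorem arcsinOp_apply (Q : R[X]) :
    arcsinOp R Q = X * (4 - X) * derivative Q + (2 - X) * Q :=
  rfl

variable (R) in
/-- The triplication polynomial: it maps `4 sin² θ` to `4 sin² 3θ`. -/
noncomputable def sinTriple : R[X] :=
  X * (3 - X) ^ 2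

variable (R) in
/-- The value of `sin 6θ / sin 2θ` as a polynomial in `4 sin² θ`. -/
noncomputable def sinTripleFactor : R[X] :=
  (X - 1) * (X - 3)

theorem X_mul_derivative_X_pow (j : ℕ) : X * derivative (X ^ j : R[X]) = (j : R[X]) * X ^ j := by
  cases j with
  | zero => simp
  | succ j => rw [derivative_X_pow_succ]; push_cast [map_natCast, C_add, C_1]; ring

theorem arcsinOp_C_mul_X_pow (c : R) (j : ℕ) :
    arcsinOp R (C c * X ^ j) = C ((4 * j + 2) * c) * X ^ j - C ((j + 1) * c) * X ^ (j + 1) := by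
  rw [arcsinOp_apply, derivative_C_mul]
  simp only [C_mul, C_add, C_ofNat, C_1, map_natCast]
  linear_combination C c * (4 - X) * X_mul_derivative_X_pow (R := R) j

theorem coeff_arcsinOp_zero (Q : R[X]) : (arcsinOp R Q).coeff 0 = 2 * Q.coeff 0 := by
  simp [arcsinOp_apply, mul_coeff_zero]

theorem coeff_arcsinOp_succ (Q : R[X]) (k : ℕ) :
    (arcsinOp R Q).coeff (k + 1) = (4 * k + 6) * Q.coeff (k + 1) - (k + 1) * Q.coeff k := by
  have hexpand : arcsinOp R Q =
      X * (C 4 * derivative Q) - X * (X * derivative Q) + C 2 * Q - X * Q := by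
    rw [arcsinOp_apply]
    simp only [C_ofNat]
    ring
  have hcoeff : (X * derivative Q).coeff k = k * Q.coeff k := by
    cases k with
    | zero => simp
    | succ k => rw [coeff_X_mul, coeff_derivative]; push_cast; ring
  simp only [hexpand, coeff_add, coeff_sub, coeff_X_mul, coeff_C_mul, coeff_derivative, hcoeff]
  ring

theorem derivative_sinTriple : derivative (sinTriple R) = 3 * sinTripleFactor R := by
  simp only [sinTriple, sinTripleFactor, derivative_mul, derivative_X, derivative_pow,
    derivative_sub, derivative_ofNat]
  norm_num [C_ofNat]
  ring

theorem arcsinOp_comp_sinTriple_mul (Q : R[X]) :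
    arcsinOp R (Q.comp (sinTriple R) * sinTripleFactor R) =
      3 * (arcsinOp R Q).comp (sinTriple R) := by
  have hfactor : derivative (sinTripleFactor R) = 2 * X - 4 := by
    simp only [sinTripleFactor, derivative_mul, derivative_X, derivative_sub, derivative_one,
      derivative_ofNat]
    ring
  simp only [arcsinOp_apply, derivative_mul, derivative_comp, derivative_sinTriple, hfactor,
    add_comp, mul_comp, sub_comp, X_comp, ofNat_comp]
  simp only [sinTriple, sinTripleFactor]
  ring

end CommRing

variable {K : Type*} [Field K] [CharZero K]

theorem X_pow_dvd_of_X_pow_dvd_arcsinOp {Q : K[X]} {J : ℕ} (hQ : X ^ J ∣ arcsinOp K Q) :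
    X ^ J ∣ Q := by
  rw [X_pow_dvd_iff] at hQ ⊢
  intro k hk
  induction k with
  | zero => simpa [coeff_arcsinOp_zero] using hQ 0 hk
  | succ k ih =>
    have hlead : (4 * k + 6 : K) ≠ 0 := by exact_mod_cast (by lia : 4 * k + 6 ≠ 0)
    have hcoeff := hQ (k + 1) hk
    rw [coeff_arcsinOp_succ, ih (by lia), mul_zero, sub_zero] at hcoeff
    exact (mul_eq_zero.1 hcoeff).resolve_left hlead

theorem arcsinOp_arcsinPoly (J : ℕ) :
    arcsinOp K (arcsinPoly K J) = 2 - C ((4 * J + 2) * arcsinCoeff K J) * X ^ J := by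
  have hterm (j : ℕ) : arcsinOp K (C (arcsinCoeff K j) * X ^ j) =
      C ((4 * j + 2) * arcsinCoeff K j) * X ^ j -
        C ((4 * (j + 1 : ℕ) + 2) * arcsinCoeff K (j + 1)) * X ^ (j + 1) := by
    rw [arcsinOp_C_mul_X_pow, arcsinCoeff_succ]
  rw [arcsinPoly, map_sum, sum_congr rfl fun j _ => hterm j,
    sum_range_sub' fun j : ℕ => C ((4 * j + 2) * arcsinCoeff K j) * X ^ j]
  simp [C_ofNat]

variable (K) in
/-- The error made by the truncation `arcsinPoly K J` in the triplication identity
`(6θ / sin 6θ) * (sin 6θ / sin 2θ) = 3 * (2θ / sin 2θ)`. -/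
noncomputable def tripleDefect (J : ℕ) : K[X] :=
  (arcsinPoly K J).comp (sinTriple K) * sinTripleFactor K - C 3 * arcsinPoly K J

-- By uniqueness of power series solutions of `arcsinOp K Q = 0`, it is enough to apply `arcsinOp`.
theorem X_pow_dvd_tripleDefect (J : ℕ) : X ^ J ∣ tripleDefect K J := by
  refine X_pow_dvd_of_X_pow_dvd_arcsinOp
    ⟨3 * C ((4 * J + 2) * arcsinCoeff K J) * (1 - ((3 - X) ^ 2) ^ J), ?_⟩
  rw [tripleDefect, map_sub, arcsinOp_comp_sinTriple_mul, ← smul_eq_C_mul, map_smul,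
    smul_eq_C_mul, arcsinOp_arcsinPoly]
  simp only [sub_comp, mul_comp, C_comp, X_pow_comp, ofNat_comp, sinTriple, mul_pow, C_ofNat]
  ring

end TripleAngle

section PadicPowIdeal

variable {p : ℕ} [Fact p.Prime]

variable (p) in
/-- The fractional ideal `p ^ n ℤ_[p]` of `ℚ_[p]`, as an additive subgroup. The congruence
`x ≡ y (mod p ^ n)` is expressed as `x - y ∈ padicPowIdeal p n`. -/
def padicPowIdeal (n : ℤ) : AddSubgroup ℚ_[p] where
  carrier := {x | ‖x‖ ≤ (p : ℝ) ^ (-n)}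
  add_mem' hx hy := (Padic.nonarchimedean _ _).trans (max_le hx hy)
  zero_mem' := by
    rw [Set.mem_ofPred_eq, norm_zero]
    positivity
  neg_mem' hx := by rwa [Set.mem_ofPred_eq, norm_neg]

variable {n k : ℤ} {x y : ℚ_[p]}

theorem mem_padicPowIdeal : x ∈ padicPowIdeal p n ↔ ‖x‖ ≤ (p : ℝ) ^ (-n) :=
  Iff.rfl

theorem mem_padicPowIdeal_one : x ∈ padicPowIdeal p 1 ↔ ‖x‖ < 1 := by
  rw [mem_padicPowIdeal, Padic.norm_le_pow_iff_norm_lt_pow_add_one, neg_add_cancel, zpow_zero]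

theorem padicPowIdeal_antitone : Antitone (padicPowIdeal p) := fun _ _ hnk _ hx =>
  mem_padicPowIdeal.2 <| (mem_padicPowIdeal.1 hx).trans <|
    zpow_le_zpow_right₀ (Nat.one_le_cast.2 (Fact.out : p.Prime).one_le) (neg_le_neg hnk)

theorem mul_mem_padicPowIdeal (hx : x ∈ padicPowIdeal p n) (hy : y ∈ padicPowIdeal p k) :
    x * y ∈ padicPowIdeal p (n + k) := by
  have hp : (p : ℝ) ≠ 0 := Nat.cast_ne_zero.2 (Fact.out : p.Prime).ne_zero
  rw [mem_padicPowIdeal, norm_mul, neg_add, zpow_add₀ hp]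
  exact mul_le_mul hx hy (norm_nonneg _) (by positivity)

theorem mul_mem_padicPowIdeal_of_integral (hx : x ∈ padicPowIdeal p 0)
    (hy : y ∈ padicPowIdeal p n) : x * y ∈ padicPowIdeal p n := by
  simpa only [zero_add] using mul_mem_padicPowIdeal hx hy

theorem intCast_mem_padicPowIdeal (z : ℤ) : (z : ℚ_[p]) ∈ padicPowIdeal p 0 := by
  simpa [mem_padicPowIdeal] using Padic.norm_int_le_one z

theorem pow_mem_padicPowIdeal (hx : x ∈ padicPowIdeal p n) (j : ℕ) :
    x ^ j ∈ padicPowIdeal p (j * n) := by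
  induction j with
  | zero => simpa using intCast_mem_padicPowIdeal (p := p) 1
  | succ j ih =>
    rw [pow_succ, Nat.cast_succ, add_one_mul]
    exact mul_mem_padicPowIdeal ih hx

theorem prime_pow_mem_padicPowIdeal (a : ℕ) : (p : ℚ_[p]) ^ a ∈ padicPowIdeal p a :=
  (Padic.norm_p_pow a).le

theorem inv_natCast_mem_padicPowIdeal {d k : ℕ} (hd : padicValNat p d ≤ k) :
    (d : ℚ_[p])⁻¹ ∈ padicPowIdeal p (-k) := by
  rcases eq_or_ne d 0 with rfl | hd0
  · simp [zero_mem]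
  · have hval : (-k : ℤ) ≤ -padicValNat p d := by lia
    refine padicPowIdeal_antitone hval ?_
    rw [mem_padicPowIdeal, norm_inv, Padic.norm_eq_zpow_neg_valuation (by exact_mod_cast hd0),
      Padic.valuation_natCast, ← zpow_neg]

theorem prime_pow_div_natCast_mem_padicPowIdeal {a d k : ℕ} (hd : padicValNat p d ≤ k) :
    (p : ℚ_[p]) ^ a / d ∈ padicPowIdeal p (a - k) := by
  rw [div_eq_mul_inv, sub_eq_add_neg]
  exact mul_mem_padicPowIdeal (prime_pow_mem_padicPowIdeal a) (inv_natCast_mem_padicPowIdeal hd)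

theorem inv_mem_padicPowIdeal (hx : ‖x‖ = 1) : x⁻¹ ∈ padicPowIdeal p 0 := by
  simp [mem_padicPowIdeal, hx]

theorem norm_eq_one_of_sub_one_mem_padicPowIdeal (hx : x - 1 ∈ padicPowIdeal p 1) : ‖x‖ = 1 := by
  rw [mem_padicPowIdeal_one, ← norm_one (α := ℚ_[p])] at hx
  simpa using Padic.norm_eq_of_norm_sub_lt_right hx

theorem mul_sub_mem_padicPowIdeal {z : ℚ_[p]} (hx : x - 1 ∈ padicPowIdeal p 1)
    (hyz : y - z ∈ padicPowIdeal p n) (hz : z ∈ padicPowIdeal p (n - 1)) :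
    x * y - z ∈ padicPowIdeal p n := by
  have hx0 : x ∈ padicPowIdeal p 0 := by
    simp [mem_padicPowIdeal, norm_eq_one_of_sub_one_mem_padicPowIdeal hx]
  have hxz := mul_mem_padicPowIdeal hx hz
  rw [add_sub_cancel] at hxz
  convert add_mem (mul_mem_padicPowIdeal_of_integral hx0 hyz) hxz using 1
  ring

theorem mul_sub_one_mem_padicPowIdeal (hn : 0 ≤ n) (hx : x - 1 ∈ padicPowIdeal p n)
    (hy : y - 1 ∈ padicPowIdeal p n) : x * y - 1 ∈ padicPowIdeal p n := by
  have hxy := mul_mem_padicPowIdeal_of_integral (padicPowIdeal_antitone hn hx) hy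
  convert add_mem (add_mem hxy hx) hy using 1
  ring

theorem pow_sub_one_mem_padicPowIdeal (hn : 0 ≤ n) (hx : x - 1 ∈ padicPowIdeal p n) (j : ℕ) :
    x ^ j - 1 ∈ padicPowIdeal p n := by
  induction j with
  | zero => simp [zero_mem]
  | succ j ih => exact pow_succ x j ▸ mul_sub_one_mem_padicPowIdeal hn ih hx

theorem inv_sub_one_mem_padicPowIdeal (hx : ‖x‖ = 1) (hxn : x - 1 ∈ padicPowIdeal p n) :
    x⁻¹ - 1 ∈ padicPowIdeal p n := by
  have hx0 : x ≠ 0 := norm_ne_zero_iff.1 (hx ▸ one_ne_zero)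
  convert neg_mem (mul_mem_padicPowIdeal_of_integral (inv_mem_padicPowIdeal hx) hxn) using 1
  field_simp
  ring

theorem eval_mem_padicPowIdeal {Q : ℚ_[p][X]} {J : ℕ} (hQ : X ^ J ∣ Q)
    (hcoeff : ∀ i, Q.coeff i ∈ padicPowIdeal p n) (hx : x ∈ padicPowIdeal p 1) :
    Q.eval x ∈ padicPowIdeal p (n + J) := by
  rw [eval_eq_sum_range]
  refine sum_mem fun i _ => ?_
  rcases lt_or_ge i J with hi | hi
  · rw [X_pow_dvd_iff.1 hQ i hi, zero_mul]
    exact zero_mem _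
  · exact padicPowIdeal_antitone (by lia)
      (mul_mem_padicPowIdeal (hcoeff i) (pow_mem_padicPowIdeal hx i))

end PadicPowIdeal

section PadicEstimates

theorem log_two_mul_add_one_le {b a j : ℕ} (hb : 2 ≤ b) (hj : j < b ^ a) :
    Nat.log b (2 * j + 1) ≤ a := by
  refine Nat.le_of_lt_succ (Nat.log_lt_of_lt_pow (by lia) ?_)
  rw [pow_succ]
  nlinarith

variable {p : ℕ} [Fact p.Prime]

theorem arcsinCoeff_mem_padicPowIdeal (j : ℕ) :
    arcsinCoeff ℚ_[p] j ∈
      padicPowIdeal p (-(Nat.log p (2 * j + 1) + Nat.log p (2 * j) : ℕ)) := by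
  refine inv_natCast_mem_padicPowIdeal ?_
  rw [padicValNat.mul (by lia) j.centralBinom_ne_zero]
  refine add_le_add (padicValNat_le_nat_log _) ?_
  rw [← Nat.factorization_def _ Fact.out]
  exact Nat.factorization_choose_le_log

theorem coeff_tripleDefect_mem_padicPowIdeal {n : ℤ} {J : ℕ}
    (hcoeff : ∀ j < J, arcsinCoeff ℚ_[p] j ∈ padicPowIdeal p n) (i : ℕ) :
    (tripleDefect ℚ_[p] J).coeff i ∈ padicPowIdeal p n := by
  let integralPart (j : ℕ) : ℤ[X] := sinTriple ℤ ^ j * sinTripleFactor ℤ - 3 * X ^ j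
  have hsum : tripleDefect ℚ_[p] J = ∑ j ∈ range J,
      C (arcsinCoeff ℚ_[p] j) * (integralPart j).map (Int.castRingHom ℚ_[p]) := by
    rw [tripleDefect, arcsinPoly, Polynomial.sum_comp, sum_mul, mul_sum, ← sum_sub_distrib]
    refine sum_congr rfl fun j _ => ?_
    simp only [integralPart, sinTriple, sinTripleFactor, Polynomial.map_sub, Polynomial.map_mul,
      Polynomial.map_pow, map_X, Polynomial.map_ofNat, Polynomial.map_one, mul_comp, C_comp,
      X_pow_comp, C_ofNat]
    ring
  rw [hsum, finsetSum_coeff]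
  refine sum_mem fun j hj => ?_
  rw [coeff_C_mul, coeff_map, mul_comm]
  exact mul_mem_padicPowIdeal_of_integral (intCast_mem_padicPowIdeal _)
    (hcoeff j (mem_range.1 hj))

theorem norm_one_sub_two_mul_prime_pow_div {a d : ℕ} (hd0 : d ≠ 0) (hd : d < 2 * p ^ a) :
    ‖(1 - 2 * (p ^ a / d) : ℚ_[p])‖ = 1 := by
  by_cases hdvd : p ^ a ∣ d
  · obtain ⟨c, rfl⟩ := hdvd
    have hc : c = 1 := by
      have hc2 : c < 2 := lt_of_mul_lt_mul_left (hd.trans_eq (mul_comm _ _)) (Nat.zero_le _)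
      have hc0 : c ≠ 0 := right_ne_zero_of_mul hd0
      lia
    have hp : (p : ℚ_[p]) ≠ 0 := Nat.cast_ne_zero.2 (Fact.out : p.Prime).ne_zero
    rw [hc, mul_one, Nat.cast_pow, div_self (pow_ne_zero a hp)]
    norm_num
  · have hval : padicValNat p d < a := by rwa [padicValNat_dvd_iff_le hd0, not_le] at hdvd
    have hval_le : (1 : ℤ) ≤ a - padicValNat p d := by lia
    refine norm_eq_one_of_sub_one_mem_padicPowIdeal (padicPowIdeal_antitone hval_le ?_)
    convert mul_mem_padicPowIdeal_of_integral (intCast_mem_padicPowIdeal (-2))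
      (prime_pow_div_natCast_mem_padicPowIdeal (a := a) (le_refl (padicValNat p d))) using 1
    push_cast
    ring

theorem binomRatio_sub_one_mem_padicPowIdeal {a j : ℕ} (hj : j < p ^ a) :
    binomRatio ℚ_[p] (p ^ a - 1) j - 1 ∈ padicPowIdeal p (a - Nat.log p (2 * j + 1)) := by
  induction j with
  | zero => simp [zero_mem]
  | succ j ih =>
    have hlog : Nat.log p (2 * (j + 1) + 1) ≤ a :=
      log_two_mul_add_one_le (Fact.out : p.Prime).two_le hj
    have hlog_mono {i : ℕ} (hi : i ≤ 2 * (j + 1) + 1) :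
        Nat.log p i ≤ Nat.log p (2 * (j + 1) + 1) := Nat.log_mono_right hi
    set n : ℤ := a - Nat.log p (2 * (j + 1) + 1)
    have hn : 0 ≤ n := by lia
    have hquot {d : ℕ} (hd : d ≤ 2 * (j + 1) + 1) : (p ^ a / d : ℚ_[p]) ∈ padicPowIdeal p n :=
      prime_pow_div_natCast_mem_padicPowIdeal ((padicValNat_le_nat_log d).trans (hlog_mono hd))
    have hnum : (1 - p ^ a / (j + 1 : ℕ) : ℚ_[p]) - 1 ∈ padicPowIdeal p n := by
      convert neg_mem (hquot (by lia : j + 1 ≤ _)) using 1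
      ring
    have hden : (1 - 2 * (p ^ a / (2 * j + 3 : ℕ)) : ℚ_[p]) - 1 ∈ padicPowIdeal p n := by
      convert mul_mem_padicPowIdeal_of_integral (intCast_mem_padicPowIdeal (-2))
        (hquot (by lia : 2 * j + 3 ≤ _)) using 1
      push_cast
      ring
    have hunit := norm_one_sub_two_mul_prime_pow_div (p := p)
      (by lia) (by lia : 2 * j + 3 < 2 * p ^ a)
    have hle : n ≤ a - Nat.log p (2 * j + 1) := by
      have hlog_le := hlog_mono (by lia : 2 * j + 1 ≤ _)
      lia
    have hprev := padicPowIdeal_antitone hle (ih (by lia))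
    rw [binomRatio_succ (by lia), Nat.sub_add_cancel (by lia), Nat.cast_pow]
    exact mul_sub_one_mem_padicPowIdeal hn hprev <|
      mul_sub_one_mem_padicPowIdeal hn (pow_sub_one_mem_padicPowIdeal hn hnum 2)
        (inv_sub_one_mem_padicPowIdeal hunit hden)

theorem two_mul_centralBinom_prime_pow_sub_one (a : ℕ) :
    2 * (1 - 2 * p ^ a) * ((p ^ a - 1).centralBinom : ℚ_[p]) =
      -(p ^ a * (p ^ a).centralBinom) := by
  have hpos : 0 < p ^ a := pow_pos (Fact.out : p.Prime).pos a
  have hrec := (p ^ a - 1).succ_mul_centralBinom_succ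
  rw [Nat.sub_add_cancel hpos] at hrec
  have hrec' := congrArg (Nat.cast : ℕ → ℚ_[p]) hrec
  push_cast [Nat.cast_sub (Nat.succ_le_of_lt hpos)] at hrec'
  linear_combination hrec'

theorem centralBinom_prime_pow_modEq_two (a : ℕ) : (p ^ a).centralBinom ≡ 2 [MOD p] := by
  have h := Choose.choose_pow_mul_pow_mul_modEq_choose_nat (p := p) (k := a) (a := 2) (b := 1)
  rwa [mul_one, Nat.choose_one_right, mul_comm] at h

theorem neg_centralBinom_div_prime_pow_sub_one_mem_padicPowIdeal (hp : p ≠ 2) {a : ℕ} (ha : a ≠ 0) :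
    -((p ^ a - 1).centralBinom / p ^ a : ℚ_[p]) - 1 ∈ padicPowIdeal p 1 := by
  have hpow : (p : ℚ_[p]) ^ a ∈ padicPowIdeal p 1 :=
    padicPowIdeal_antitone (by lia) (prime_pow_mem_padicPowIdeal a)
  have htwo : (2⁻¹ : ℚ_[p]) ∈ padicPowIdeal p 0 := by
    have hnorm := Padic.norm_natCast_eq_one_iff.2
      ((Nat.coprime_primes (Fact.out : p.Prime) Nat.prime_two).2 hp)
    exact_mod_cast inv_mem_padicPowIdeal hnorm
  have hden : (1 - 2 * p ^ a : ℚ_[p]) - 1 ∈ padicPowIdeal p 1 := by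
    convert mul_mem_padicPowIdeal_of_integral (intCast_mem_padicPowIdeal (-2)) hpow using 1
    push_cast
    ring
  have hden_norm := norm_eq_one_of_sub_one_mem_padicPowIdeal hden
  have hnum : (2⁻¹ * (p ^ a).centralBinom : ℚ_[p]) - 1 ∈ padicPowIdeal p 1 := by
    have hdvd : (p : ℤ) ∣ (p ^ a).centralBinom - 2 :=
      (centralBinom_prime_pow_modEq_two a).symm.dvd
    have hmem : (((p ^ a).centralBinom - 2 : ℤ) : ℚ_[p]) ∈ padicPowIdeal p 1 :=
      mem_padicPowIdeal_one.2 (Padic.norm_intCast_lt_one_iff.2 hdvd)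
    convert mul_mem_padicPowIdeal_of_integral htwo hmem using 1
    push_cast
    ring
  have hden0 : (1 - 2 * p ^ a : ℚ_[p]) ≠ 0 := norm_ne_zero_iff.1 (hden_norm ▸ one_ne_zero)
  have hp0 : (p : ℚ_[p]) ≠ 0 := Nat.cast_ne_zero.2 (Fact.out : p.Prime).ne_zero
  convert mul_sub_one_mem_padicPowIdeal zero_le_one hnum
    (inv_sub_one_mem_padicPowIdeal hden_norm hden) using 2
  rw [eq_mul_inv_iff_mul_eq₀ hden0]
  field_simp
  linear_combination -two_mul_centralBinom_prime_pow_sub_one (p := p) a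

end PadicEstimates

section ThreeAdic

open Nat in
theorem two_mul_log_three_add_log_three_le {j : ℕ} (hj : j ≠ 0) :
    2 * log 3 (2 * j + 1) + log 3 (2 * j) ≤ j + 1 := by
  have hmono : log 3 (2 * j) ≤ log 3 (2 * j + 1) := log_mono_right (2 * j).le_succ
  rcases lt_or_ge j 13 with hj13 | hj13
  · have hsmall : ∀ j < 13, j ≠ 0 → 2 * log 3 (2 * j + 1) + log 3 (2 * j) ≤ j + 1 := by decide
    exact hsmall j hj13 hj
  · have hgrowth (s : ℕ) (hs : 3 ≤ s) : 6 * s ≤ 3 ^ s + 1 := by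
      induction s, hs using le_induction with
      | base => norm_num
      | succ s hs ih => rw [pow_succ]; lia
    have hpow : 3 ^ log 3 (2 * j + 1) ≤ 2 * j + 1 := pow_log_le_self 3 (by lia)
    have hlog : 3 ≤ log 3 (2 * j + 1) := le_log_of_pow_le (by norm_num) (by lia)
    have hlinear := hgrowth _ hlog
    lia

theorem sum_binomRatio_sub_eval_arcsinPoly_mem_padicPowIdeal {z : ℚ_[3]}
    (hz : z ∈ padicPowIdeal 3 1) (a : ℕ) :
    ∑ j ∈ range (3 ^ a), arcsinCoeff ℚ_[3] j * binomRatio ℚ_[3] (3 ^ a - 1) j * z ^ j -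
      (arcsinPoly ℚ_[3] (3 ^ a)).eval z ∈ padicPowIdeal 3 (a - 1) := by
  rw [eval_arcsinPoly, ← sum_sub_distrib]
  refine sum_mem fun j hj => ?_
  have hterm : arcsinCoeff ℚ_[3] j * binomRatio ℚ_[3] (3 ^ a - 1) j * z ^ j -
      arcsinCoeff ℚ_[3] j * z ^ j =
        arcsinCoeff ℚ_[3] j * (binomRatio ℚ_[3] (3 ^ a - 1) j - 1) * z ^ j := by ring
  rw [hterm]
  rcases eq_or_ne j 0 with rfl | hj0
  · simp [zero_mem]
  · refine padicPowIdeal_antitone ?_ (mul_mem_padicPowIdeal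
      (mul_mem_padicPowIdeal (arcsinCoeff_mem_padicPowIdeal j)
        (binomRatio_sub_one_mem_padicPowIdeal (mem_range.1 hj))) (pow_mem_padicPowIdeal hz j))
    have hlog := two_mul_log_three_add_log_three_le hj0
    lia

theorem eval_arcsinPoly_sub_one_mem_padicPowIdeal {w : ℚ_[3]} (hw : w ∈ padicPowIdeal 3 3)
    {J : ℕ} (hJ : J ≠ 0) : (arcsinPoly ℚ_[3] J).eval w - 1 ∈ padicPowIdeal 3 1 := by
  obtain ⟨n, rfl⟩ := Nat.exists_eq_succ_of_ne_zero hJ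
  rw [eval_arcsinPoly, sum_range_succ', arcsinCoeff_zero, pow_zero, mul_one, add_sub_cancel_right]
  refine sum_mem fun j _ => padicPowIdeal_antitone ?_
    (mul_mem_padicPowIdeal (arcsinCoeff_mem_padicPowIdeal (j + 1)) (pow_mem_padicPowIdeal hw _))
  have hlog := two_mul_log_three_add_log_three_le j.succ_ne_zero
  lia

theorem eval_tripleDefect_mem_padicPowIdeal {z : ℚ_[3]} (hz : z ∈ padicPowIdeal 3 1) (a : ℕ) :
    (tripleDefect ℚ_[3] (3 ^ a)).eval z ∈ padicPowIdeal 3 a := by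
  have hcoeff (j : ℕ) (hj : j < 3 ^ a) : arcsinCoeff ℚ_[3] j ∈ padicPowIdeal 3 (-(2 * a)) := by
    have hodd : Nat.log 3 (2 * j + 1) ≤ a := log_two_mul_add_one_le (by norm_num) hj
    have heven : Nat.log 3 (2 * j) ≤ Nat.log 3 (2 * j + 1) := Nat.log_mono_right (2 * j).le_succ
    exact padicPowIdeal_antitone (by lia) (arcsinCoeff_mem_padicPowIdeal j)
  have hpow : 3 * a ≤ 3 ^ a := Nat.mul_le_pow (by norm_num) a
  exact padicPowIdeal_antitone (by lia) (eval_mem_padicPowIdeal (X_pow_dvd_tripleDefect _)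
    (coeff_tripleDefect_mem_padicPowIdeal hcoeff) hz)

theorem div_three_mem_padicPowIdeal {x : ℚ_[3]} {n : ℤ} (hx : x ∈ padicPowIdeal 3 n) :
    x / 3 ∈ padicPowIdeal 3 (n - 1) := by
  rw [div_eq_mul_inv, sub_eq_add_neg]
  exact mul_mem_padicPowIdeal hx
    (inv_natCast_mem_padicPowIdeal (d := 3) (k := 1) padicValNat_self.le)

theorem three_mem_padicPowIdeal : (3 : ℚ_[3]) ∈ padicPowIdeal 3 1 := by
  simpa using prime_pow_mem_padicPowIdeal (p := 3) 1

theorem eval_arcsinPoly_sub_div_three_mem_padicPowIdeal {t : ℚ_[3]} (ht : t ∈ padicPowIdeal 3 1)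
    {v a : ℕ} (htv : t ∈ padicPowIdeal 3 v) (hva : v < a) :
    (arcsinPoly ℚ_[3] (3 ^ a)).eval (3 - t) - t / 3 ∈ padicPowIdeal 3 v := by
  have hz : 3 - t ∈ padicPowIdeal 3 1 := sub_mem three_mem_padicPowIdeal ht
  have hw : (3 - t) * t ^ 2 ∈ padicPowIdeal 3 3 :=
    padicPowIdeal_antitone (by norm_num) (mul_mem_padicPowIdeal hz (pow_mem_padicPowIdeal ht 2))
  set F := (arcsinPoly ℚ_[3] (3 ^ a)).eval (3 - t)
  set G := (arcsinPoly ℚ_[3] (3 ^ a)).eval ((3 - t) * t ^ 2)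
  have hG : G - 1 ∈ padicPowIdeal 3 1 :=
    eval_arcsinPoly_sub_one_mem_padicPowIdeal hw (pow_ne_zero a three_ne_zero)
  have hdefect : (tripleDefect ℚ_[3] (3 ^ a)).eval (3 - t) = G * ((2 - t) * -t) - 3 * F := by
    simp only [tripleDefect, sinTriple, sinTripleFactor, eval_sub, eval_mul, eval_comp, eval_C,
      eval_pow, eval_X, eval_ofNat, eval_one, G, F]
    rw [sub_sub_cancel]
    ring
  have hcofactor : -2 * (G - 1) + t * (G - 1) + t - 3 ∈ padicPowIdeal 3 1 := by
    have hint : -2 + t ∈ padicPowIdeal 3 0 :=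
      add_mem (by simpa using intCast_mem_padicPowIdeal (p := 3) (-2))
        (padicPowIdeal_antitone zero_le_one ht)
    rw [← add_mul]
    exact sub_mem (add_mem (mul_mem_padicPowIdeal_of_integral hint hG) ht)
      three_mem_padicPowIdeal
  have hmain := mul_mem_padicPowIdeal (div_three_mem_padicPowIdeal htv) hcofactor
  rw [sub_add_cancel] at hmain
  have herror := padicPowIdeal_antitone (by lia : (v : ℤ) ≤ a - 1)
    (div_three_mem_padicPowIdeal (eval_tripleDefect_mem_padicPowIdeal hz a))
  convert sub_mem hmain herror using 1
  rw [hdefect]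
  ring

theorem sum_binomRatio_sub_div_three_mem_padicPowIdeal {t : ℚ_[3]} (ht : t ∈ padicPowIdeal 3 1)
    {v a : ℕ} (htv : t ∈ padicPowIdeal 3 v) (hva : v < a) :
    ∑ j ∈ range (3 ^ a), arcsinCoeff ℚ_[3] j * binomRatio ℚ_[3] (3 ^ a - 1) j * (3 - t) ^ j -
      t / 3 ∈ padicPowIdeal 3 v := by
  have hle : (v : ℤ) ≤ a - 1 := by lia
  rw [← sub_add_sub_cancel]
  exact add_mem (padicPowIdeal_antitone hle <|
      sum_binomRatio_sub_eval_arcsinPoly_mem_padicPowIdeal (sub_mem three_mem_padicPowIdeal ht) a)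
    (eval_arcsinPoly_sub_div_three_mem_padicPowIdeal ht htv hva)

end ThreeAdic

theorem stmt_6_general {m : ℚ_[3]} (hm : ‖m - 1‖ < 1) {v a : ℕ}
    (hv : ‖m - 1‖ ≤ (3 : ℝ) ^ (-(v : ℤ))) (ha : v < a) :
    ‖((3 : ℚ_[3]) ^ a)⁻¹ * (∑ k ∈ range (3 ^ a),
        (-1) ^ k * ((3 ^ a - 1).choose k : ℚ_[3]) * ((2 * k).choose k : ℚ_[3]) / m ^ k) -
      (-((m - 1) / 3))‖ ≤ (3 : ℝ) ^ (-(v : ℤ)) := by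
  have hm1 : m - 1 ∈ padicPowIdeal 3 1 := mem_padicPowIdeal_one.2 hm
  have hmv : m - 1 ∈ padicPowIdeal 3 v := mem_padicPowIdeal.2 hv
  have hm_norm : ‖m‖ = 1 := norm_eq_one_of_sub_one_mem_padicPowIdeal hm1
  have hm0 : m ≠ 0 := norm_ne_zero_iff.1 (hm_norm ▸ one_ne_zero)
  have hz : 4 - m = 3 - (m - 1) := by ring
  have hS := sum_binomRatio_sub_div_three_mem_padicPowIdeal hm1 hmv ha
  have hunit := mul_sub_one_mem_padicPowIdeal zero_le_one
    (neg_centralBinom_div_prime_pow_sub_one_mem_padicPowIdeal (p := 3) (by norm_num) ha.ne_bot)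
    (inv_sub_one_mem_padicPowIdeal (by simp [hm_norm])
      (pow_sub_one_mem_padicPowIdeal zero_le_one hm1 (3 ^ a - 1)))
  rw [Nat.cast_ofNat] at hunit
  have hsum := sum_div_pow_eq_sum_arcsinCoeff hm0 (3 ^ a - 1)
  rw [Nat.sub_add_cancel (Nat.one_le_pow _ _ three_pos), hz] at hsum
  have hcongr := neg_mem (mul_sub_mem_padicPowIdeal hunit hS (div_three_mem_padicPowIdeal hmv))
  rw [mem_padicPowIdeal, Nat.cast_ofNat] at hcongr
  rw [hsum]
  convert hcongr using 2
  ring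

/-- Sun's conjecture (ii), second part: for `m ≡ 1 (mod 3)`, `m ≠ 1`, and
`a > ν₃(m−1)`, one has
`(1/3^a)·∑_{k<3^a} (−1)^k C(3^a−1,k) C(2k,k)/m^k ≡ −(m−1)/3 (mod 3^{ν₃(m−1)})`
as 3-adic numbers. -/
theorem stmt_6 (m : ℤ) (hm : m ≡ 1 [ZMOD 3]) (hm1 : m ≠ 1) (a : ℕ)
    (ha : padicValInt 3 (m - 1) < a) :
    ‖((3 : ℚ_[3]) ^ a)⁻¹ * (∑ k ∈ Finset.range (3 ^ a),
          (-1) ^ k * (Nat.choose (3 ^ a - 1) k : ℚ_[3]) * (Nat.choose (2 * k) k : ℚ_[3]) /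
            (m : ℚ_[3]) ^ k) -
        (-(((m : ℚ_[3]) - 1) / 3))‖ ≤ (3 : ℝ) ^ (-(padicValInt 3 (m - 1) : ℤ)) := by
  refine stmt_6_general ?_ ?_ ha
  · exact_mod_cast Padic.norm_intCast_lt_one_iff.2 hm.symm.dvd
  · exact_mod_cast (Padic.norm_int_le_pow_iff_dvd (m - 1) _).2 (padicValInt_dvd _)
end

section
/- For any integer a ≥ 2, (1/3^a)·∑_{k=0}^{3^a−1} (−1)^k·C(3^a−1,k)·C(2k,k) ≡ −3^{a−1} (mod 3^a). -/
/-!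
The sum `S` is the coefficient of `X ^ n` in `(X - (1 + X) ^ 2) ^ n = (-(X - w) * (X - w ^ 2)) ^ n`
for `n = 3 ^ a - 1` and `w` a primitive cube root of unity, so
`S = ∑ (n.choose j) ^ 2 * w ^ (n + j)`. Splitting `j` modulo `3` and using the symmetry
`j ↦ n - j` turns this into a sum of differences
`(n.choose (3 * k + 1)) ^ 2 - (n.choose (3 * k)) ^ 2`, each of which is congruent to
`-2 * 3 ^ a * (m.choose k) ^ 2 / (3 * k + 1)` modulo `3 ^ (2 * a)`, where `m = 3 ^ (a - 1) - 1`.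

Modulo `3 ^ a` the factor `1 / (3 * k + 1) = 1 - 3 * (k / (3 * k + 1))` may be replaced by `1`: if a
polynomial `f` satisfies `p ∣ ∑ r < p, f r`, then `p ^ b` divides
`∑ k < p ^ b, ((p ^ b - 1).choose k) ^ 2 * f k`, because `((p ^ b - 1).choose k) ^ 2` depends modulo
`p ^ b` only on `k / p`, and averaging `f` over blocks of length `p` preserves the hypothesis on
`f`. Finally `∑ (m.choose k) ^ 2 = (m + 1) * catalan m`, and `catalan m ≡ -1` modulo `3`.
-/

open Finset Polynomial

theorem sum_range_mul_eq_sum_sum {M : Type*} [AddCommMonoid M] (f : ℕ → M) (m n : ℕ) :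
    ∑ j ∈ range (m * n), f j = ∑ k ∈ range n, ∑ r ∈ range m, f (m * k + r) := by
  induction n with
  | zero => simp
  | succ n ih => rw [mul_add_one, sum_range_add, ih, sum_range_succ]

section CentralTrinomial

variable {R : Type*} [CommRing R]

theorem coeff_X_add_C_mul_X_add_C_pow (r s : R) (n : ℕ) :
    (((X + C r) * (X + C s)) ^ n).coeff n =
      ∑ k ∈ range (n + 1), (n.choose k : R) ^ 2 * r ^ (n - k) * s ^ k := by
  rw [mul_pow, coeff_mul, Nat.sum_antidiagonal_eq_sum_range_succ_mk]
  refine sum_congr rfl fun k hk => ?_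
  have hkn : k ≤ n := mem_range_succ_iff.mp hk
  rw [coeff_X_add_C_pow, coeff_X_add_C_pow, Nat.choose_symm hkn, Nat.sub_sub_self hkn]
  ring

theorem coeff_X_sub_one_add_X_sq_pow (n : ℕ) :
    ((X - (1 + X) ^ 2 : R[X]) ^ n).coeff n =
      ∑ k ∈ range (n + 1), (-1) ^ k * (n.choose k : R) * ((2 * k).choose k : R) := by
  rw [sub_eq_neg_add, add_pow, finsetSum_coeff]
  refine sum_congr rfl fun k hk => ?_
  have hkn : k ≤ n := mem_range_succ_iff.mp hk
  have hterm : (-(1 + X : R[X]) ^ 2) ^ k * X ^ (n - k) * (n.choose k : R[X]) =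
      C ((-1) ^ k * (n.choose k : R)) * ((1 + X) ^ (2 * k) * X ^ (n - k)) := by
    simp only [neg_pow ((1 + X : R[X]) ^ 2), ← pow_mul, C_mul, C_pow, C_neg, C_1, map_natCast]
    ring
  rw [hterm, coeff_C_mul, coeff_mul_X_pow', if_pos (Nat.sub_le n k), Nat.sub_sub_self hkn,
    coeff_one_add_X_pow]

theorem sum_neg_one_pow_mul_choose_mul_choose_eq_sum_choose_sq_mul_pow {w : R}
    (hw : w ^ 2 + w + 1 = 0) (n : ℕ) :
    ∑ k ∈ range (n + 1), (-1) ^ k * (n.choose k : R) * ((2 * k).choose k : R) =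
      ∑ k ∈ range (n + 1), (n.choose k : R) ^ 2 * w ^ (n + k) := by
  have hfactor : (X - (1 + X) ^ 2 : R[X]) = C (-1) * ((X + C (-w)) * (X + C (-w ^ 2))) := by
    have hC : C w ^ 2 + C w + 1 = (0 : R[X]) := by simpa using congrArg C hw
    simp only [C_neg, C_pow, C_1]
    linear_combination (-X - 1 + C w) * hC
  rw [← coeff_X_sub_one_add_X_sq_pow, hfactor, mul_pow, ← C_pow, coeff_C_mul,
    coeff_X_add_C_mul_X_add_C_pow, mul_sum]
  refine sum_congr rfl fun k hk => ?_
  obtain ⟨d, rfl⟩ := Nat.exists_eq_add_of_le (mem_range_succ_iff.mp hk)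
  have hsign : ((-1 : R) ^ (k + d)) ^ 2 = 1 := by rw [← pow_mul, pow_mul', neg_one_sq, one_pow]
  rw [Nat.add_sub_cancel_left, neg_pow w, neg_pow (w ^ 2)]
  linear_combination ((k + d).choose k : R) ^ 2 * w ^ (k + d + k) * hsign

end CentralTrinomial

theorem sum_choose_three_mul_sq_eq_sum_choose_three_mul_add_two_sq (m : ℕ) :
    ∑ k ∈ range (m + 1), ((3 * m + 2).choose (3 * k)) ^ 2 =
      ∑ k ∈ range (m + 1), ((3 * m + 2).choose (3 * k + 2)) ^ 2 := by
  rw [← sum_range_reflect]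
  refine sum_congr rfl fun k hk => ?_
  have hkm : k ≤ m := mem_range_succ_iff.mp hk
  rw [← Nat.choose_symm (by lia)]
  congr 2
  lia

theorem sum_neg_one_pow_mul_choose_mul_choose_eq_sum_sub (m : ℕ) :
    ∑ k ∈ range (3 * (m + 1)), (-1) ^ k * ((3 * m + 2).choose k : ℤ) * ((2 * k).choose k : ℤ) =
      ∑ k ∈ range (m + 1),
        (((3 * m + 2).choose (3 * k + 1) : ℤ) ^ 2 - ((3 * m + 2).choose (3 * k) : ℤ) ^ 2) := by
  obtain ⟨w, hw⟩ : ∃ w : ℂ, w ^ 2 + w + 1 = 0 := by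
    have hsum := (Complex.isPrimitiveRoot_exp 3 (by norm_num)).geom_sum_eq_zero (by norm_num)
    simp only [sum_range_succ, range_zero, sum_empty] at hsum
    exact ⟨_, by linear_combination hsum⟩
  have hw3 : w ^ 3 = 1 := by linear_combination (w - 1) * hw
  have hpow (i r : ℕ) : w ^ (3 * i + r) = w ^ r := by rw [pow_add, pow_mul, hw3, one_pow, one_mul]
  let c (j : ℕ) : ℂ := ((3 * m + 2).choose j : ℂ) ^ 2
  have hreflect : ∑ k ∈ range (m + 1), c (3 * k) = ∑ k ∈ range (m + 1), c (3 * k + 2) := by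
    simp only [c]
    exact_mod_cast sum_choose_three_mul_sq_eq_sum_choose_three_mul_add_two_sq m
  have hcast : ∑ k ∈ range (3 * (m + 1)),
      (-1) ^ k * ((3 * m + 2).choose k : ℂ) * ((2 * k).choose k : ℂ) =
        ∑ k ∈ range (m + 1), (c (3 * k + 1) - c (3 * k)) := by
    calc
      _ = ∑ k ∈ range (3 * (m + 1)), c k * w ^ (3 * m + 2 + k) :=
        sum_neg_one_pow_mul_choose_mul_choose_eq_sum_choose_sq_mul_pow hw (3 * m + 2)
      _ = ∑ k ∈ range (m + 1), (c (3 * k) * w ^ 2 + c (3 * k + 1) + c (3 * k + 2) * w) := by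
        rw [sum_range_mul_eq_sum_sum]
        refine sum_congr rfl fun k _ => ?_
        have hexp (r : ℕ) : w ^ (3 * m + 2 + (3 * k + r)) = w ^ (2 + r) := by
          rw [← hpow (m + k) (2 + r)]
          congr 1
          ring
        simp only [sum_range_succ, range_zero, sum_empty, hexp]
        linear_combination (c (3 * k + 1) + c (3 * k + 2) * w) * hw3
      _ = _ := by
        rw [sum_add_distrib, sum_add_distrib, sum_sub_distrib, ← sum_mul, ← sum_mul]
        linear_combination (∑ k ∈ range (m + 1), c (3 * k)) * hw - w * hreflect
  apply Int.cast_injective (α := ℂ)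
  push_cast
  exact hcast

theorem choose_succ_sq_modEq {n k : ℕ} {v : ℤ} (hv : (k + 1) * v ≡ 1 [ZMOD (n + 1) ^ 2]) :
    (n.choose (k + 1) : ℤ) ^ 2 ≡ n.choose k ^ 2 * (1 - 2 * (n + 1) * v) [ZMOD (n + 1) ^ 2] := by
  have hratio : (n.choose (k + 1) : ℤ) * (k + 1) = n.choose k * (n - k) := by
    rcases le_or_gt k n with hk | hk
    · exact_mod_cast congrArg (Nat.cast (R := ℤ)) (Nat.choose_succ_right_eq n k)
    · simp [Nat.choose_eq_zero_of_lt hk, Nat.choose_eq_zero_of_lt (hk.trans k.lt_succ_self)]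
  have hchoose : (n.choose (k + 1) : ℤ) ≡ n.choose k * ((n + 1) * v - 1) [ZMOD (n + 1) ^ 2] := by
    obtain ⟨t, ht⟩ := hv.dvd
    refine Int.modEq_iff_dvd.mpr ⟨-(n.choose k + n.choose (k + 1)) * t, ?_⟩
    linear_combination -v * hratio - (n.choose k + n.choose (k + 1) : ℤ) * ht
  refine (hchoose.pow 2).trans (Int.modEq_iff_dvd.mpr ⟨-(n.choose k * v) ^ 2, ?_⟩)
  ring

theorem exists_eval_mul_add_eq {R : Type*} [CommRing R] (f : R[X]) (p r : R) :
    ∃ g : R[X], ∀ k : R, f.eval (p * k + r) =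
      f.eval r + p * (f.derivative.eval r * k) + p ^ 2 * g.eval k := by
  obtain ⟨g, hg⟩ := binomExpansion (f.map C) (C r) (C p * X)
  refine ⟨g * X ^ 2, fun k => ?_⟩
  have eval_eval_map (h q : R[X]) : ((h.map C).eval q).eval k = h.eval (q.eval k) := by
    rw [eval_map]
    exact eval_comp
  have heval := congrArg (eval k) hg
  simp only [derivative_map, eval_add, eval_mul, eval_pow, eval_C, eval_X, eval_eval_map] at heval
  rw [eval_mul, eval_pow, eval_X, add_comm, heval]
  ring

section OddModulus

variable {p : ℕ}

theorem dvd_sum_range_id_of_odd (hp : Odd p) : (p : ℤ) ∣ ∑ r ∈ range p, (r : ℤ) := by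
  have hcoprime : p.Coprime 2 := Nat.coprime_two_right.mpr hp
  have hdvd : p ∣ ∑ r ∈ range p, r :=
    hcoprime.dvd_of_dvd_mul_right ⟨p - 1, sum_range_id_mul_two p⟩
  simpa using Int.natCast_dvd_natCast.mpr hdvd

theorem exists_sum_eval_mul_add_eq (hp : Odd p) {f : ℤ[X]}
    (hf : (p : ℤ) ∣ ∑ r ∈ range p, f.eval (r : ℤ)) :
    ∃ g : ℤ[X], (∀ k : ℤ, ∑ r ∈ range p, f.eval (p * k + r) = p * g.eval k) ∧
      (p : ℤ) ∣ ∑ r ∈ range p, g.eval (r : ℤ) := by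
  choose g hg using fun r : ℕ => exists_eval_mul_add_eq f p r
  obtain ⟨s, hs⟩ := hf
  let d := ∑ r ∈ range p, f.derivative.eval (r : ℤ)
  let h := ∑ r ∈ range p, g r
  refine ⟨C s + C d * X + (p : ℤ[X]) * h, fun k => ?_, ?_⟩
  · simp only [hg, sum_add_distrib, ← mul_sum, ← sum_mul, hs, eval_add, eval_mul, eval_C, eval_X,
      eval_natCast, eval_finsetSum, d, h]
    ring
  · obtain ⟨t, ht⟩ := dvd_sum_range_id_of_odd hp
    simp only [eval_add, eval_mul, eval_C, eval_X, eval_natCast, sum_add_distrib, sum_const,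
      card_range, nsmul_eq_mul, ← mul_sum, ht]
    exact ⟨s + d * t + ∑ r ∈ range p, h.eval (r : ℤ), by ring⟩

theorem exists_mul_one_sub_mul_eval_modEq_one (hp : Odd p) (n : ℕ) :
    ∃ f : ℤ[X], (p : ℤ) ∣ ∑ r ∈ range p, f.eval (r : ℤ) ∧
      ∀ k : ℤ, (p * k + 1) * (1 - p * f.eval k) ≡ 1 [ZMOD p ^ n] := by
  induction n with
  | zero => exact ⟨0, by simp, fun k => by simp⟩
  | succ n ih =>
    obtain ⟨f, -, hf⟩ := ih
    -- Iterating `f ↦ X * (1 - p * f)` converges `p`-adically to its fixed point `X / (1 + p * X)`.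
    refine ⟨X * (1 - C (p : ℤ) * f), ?_, fun k => ?_⟩
    · simp only [eval_mul, eval_sub, eval_X, eval_C, mul_sub, mul_one, sum_sub_distrib,
        mul_left_comm _ (p : ℤ), ← mul_sum]
      exact dvd_sub (dvd_sum_range_id_of_odd hp) (dvd_mul_right _ _)
    · obtain ⟨t, ht⟩ := (hf k).dvd
      refine Int.modEq_iff_dvd.mpr ⟨-k * t, ?_⟩
      simp only [eval_mul, eval_sub, eval_X, eval_one, eval_C]
      linear_combination -(p * k) * ht

end OddModulus

section PrimePower

variable {p : ℕ} [Fact p.Prime]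

theorem choose_prime_pow_succ_modEq (b j : ℕ) :
    ((p ^ (b + 1)).choose j : ℤ) ≡ if p ∣ j then ((p ^ b).choose (j / p) : ℤ) else 0
      [ZMOD p ^ (b + 1)] := by
  have hp : p.Prime := Fact.out
  have hbase : ((p : ℕ) : ℤ[X]) ∣ (1 + X) ^ p - (1 + X ^ p) := by
    obtain ⟨r, hr⟩ := exists_add_pow_prime_eq hp (1 : ℤ[X]) X
    exact ⟨X * r, by rw [hr]; ring⟩
  have hpow := dvd_sub_pow_of_dvd_sub hbase b
  have hexpand : (1 + X ^ p : ℤ[X]) ^ p ^ b = expand ℤ p ((1 + X) ^ p ^ b) := by simp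
  rw [← pow_mul, ← pow_succ', hexpand, ← map_natCast C, ← C_pow, C_dvd_iff_dvd_coeff] at hpow
  have hcoeff := hpow j
  rw [coeff_sub, coeff_expand hp.pos, coeff_one_add_X_pow, coeff_one_add_X_pow] at hcoeff
  exact (Int.modEq_iff_dvd.mpr hcoeff).symm

theorem neg_one_pow_mul_choose_prime_pow_succ_sub_one_modEq (hp : Odd p) (b j : ℕ) :
    (-1) ^ j * ((p ^ (b + 1) - 1).choose j : ℤ) ≡
      (-1) ^ (j / p) * ((p ^ b - 1).choose (j / p) : ℤ) [ZMOD p ^ (b + 1)] := by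
  have hpos : 0 < p := hp.pos
  have pascal (q : ℕ) (hq : 0 < q) (i : ℕ) : (-1) ^ (i + 1) * ((q - 1).choose (i + 1) : ℤ) =
      (-1) ^ i * ((q - 1).choose i : ℤ) + (-1) ^ (i + 1) * (q.choose (i + 1) : ℤ) := by
    rw [Nat.choose_eq_choose_pred_add hq i.succ_pos, Nat.succ_eq_add_one, Nat.add_sub_cancel]
    push_cast
    ring
  induction j with
  | zero => simp
  | succ j ih =>
    have hstep := ih.add ((choose_prime_pow_succ_modEq b (j + 1)).mul_left ((-1) ^ (j + 1)))
    rw [← pascal _ (pow_pos hpos _), Nat.succ_div] at hstep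
    rw [Nat.succ_div]
    split_ifs at hstep ⊢ with hdvd
    · have hsign : (-1 : ℤ) ^ (j + 1) = (-1) ^ (j / p + 1) := by
        obtain ⟨k, hk⟩ := hdvd
        rw [← Nat.succ_div_of_dvd ⟨k, hk⟩, hk, Nat.mul_div_cancel_left _ hpos, pow_mul,
          hp.neg_one_pow]
      rw [pascal (p ^ b) (pow_pos hpos _), ← hsign]
      exact hstep
    · simpa using hstep

theorem choose_prime_pow_succ_sub_one_sq_modEq (hp : Odd p) (b j : ℕ) :
    ((p ^ (b + 1) - 1).choose j : ℤ) ^ 2 ≡ ((p ^ b - 1).choose (j / p) : ℤ) ^ 2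
      [ZMOD p ^ (b + 1)] := by
  simpa [mul_pow, ← pow_mul, mul_comm _ 2] using
    (neg_one_pow_mul_choose_prime_pow_succ_sub_one_modEq hp b j).pow 2

theorem centralBinom_prime_pow_modEq (b : ℕ) : (p ^ b).centralBinom ≡ 2 [MOD p] := by
  induction b with
  | zero => simpa [Nat.centralBinom] using Nat.ModEq.refl 2
  | succ b ih =>
    have hlucas := Choose.choose_modEq_choose_mod_mul_choose_div_nat
      (n := 2 * p ^ (b + 1)) (k := p ^ (b + 1)) (p := p)
    have hpos : 0 < p := (Fact.out : p.Prime).pos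
    rw [pow_succ', mul_left_comm, Nat.mul_mod_right, Nat.mul_mod_right, Nat.choose_self, one_mul,
      Nat.mul_div_cancel_left _ hpos, Nat.mul_div_cancel_left _ hpos] at hlucas
    rw [pow_succ', Nat.centralBinom, mul_left_comm]
    exact hlucas.trans ih

theorem catalan_prime_pow_sub_one_modEq (hp : Odd p) {b : ℕ} (hb : b ≠ 0) :
    (catalan (p ^ b - 1) : ℤ) ≡ -1 [ZMOD p] := by
  obtain ⟨m, hm⟩ : ∃ m, p ^ b = m + 1 := Nat.exists_eq_succ_of_ne_zero (pow_pos hp.pos b).ne'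
  have hcentral : ((m + 1).centralBinom : ℤ) = 2 * (2 * p ^ b - 1) * catalan m := by
    have hrec := Nat.succ_mul_centralBinom_succ m
    rw [← succ_mul_catalan_eq_centralBinom m, mul_left_comm, mul_right_inj' m.succ_ne_zero] at hrec
    have hm' : (p : ℤ) ^ b = m + 1 := mod_cast hm
    rw [hrec, hm']
    push_cast
    ring
  have htwo : ((m + 1).centralBinom : ℤ) ≡ 2 [ZMOD p] :=
    mod_cast (Int.natCast_modEq_iff.mpr (hm ▸ centralBinom_prime_pow_modEq (p := p) b))
  have hdvd : (p : ℤ) ∣ p ^ b := dvd_pow_self _ hb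
  have hcoprime : IsCoprime (p : ℤ) 2 := by
    exact_mod_cast Nat.isCoprime_iff_coprime.mpr (Nat.coprime_two_right.mpr hp)
  rw [hm, Nat.add_sub_cancel]
  refine (Int.modEq_iff_dvd.mpr (hcoprime.dvd_of_dvd_mul_left ?_))
  obtain ⟨s, hs⟩ := (hcentral ▸ htwo).dvd
  obtain ⟨t, ht⟩ := hdvd
  exact ⟨-s - 4 * t * catalan m, by linear_combination -hs - 4 * (catalan m : ℤ) * ht⟩

theorem sum_choose_prime_pow_sub_one_sq_modEq (hp : Odd p) {b : ℕ} (hb : b ≠ 0) :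
    ∑ k ∈ range (p ^ b), ((p ^ b - 1).choose k : ℤ) ^ 2 ≡ -p ^ b [ZMOD p ^ (b + 1)] := by
  have hsum : ∑ k ∈ range (p ^ b), (p ^ b - 1).choose k ^ 2 = p ^ b * catalan (p ^ b - 1) := by
    have hq : p ^ b - 1 + 1 = p ^ b := Nat.sub_add_cancel (pow_pos hp.pos b)
    have hvandermonde := Nat.sum_range_choose_sq (p ^ b - 1)
    have hcatalan := succ_mul_catalan_eq_centralBinom (p ^ b - 1)
    rw [hq] at hvandermonde hcatalan
    exact hvandermonde.trans hcatalan.symm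
  have hmul := (catalan_prime_pow_sub_one_modEq hp hb).mul_left' (c := (p : ℤ) ^ b)
  rw [← pow_succ, mul_neg_one] at hmul
  have hsum' := congrArg (Nat.cast (R := ℤ)) hsum
  push_cast at hsum'
  rwa [hsum']

theorem prime_pow_dvd_sum_choose_sq_mul_eval (hp : Odd p) (b : ℕ) {f : ℤ[X]}
    (hf : (p : ℤ) ∣ ∑ r ∈ range p, f.eval (r : ℤ)) :
    (p : ℤ) ^ b ∣ ∑ k ∈ range (p ^ b), ((p ^ b - 1).choose k : ℤ) ^ 2 * f.eval (k : ℤ) := by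
  induction b generalizing f with
  | zero => simp
  | succ b ih =>
    obtain ⟨g, hg, hgsum⟩ := exists_sum_eval_mul_add_eq hp hf
    have hreduce :
        ∑ j ∈ range (p ^ (b + 1)), ((p ^ (b + 1) - 1).choose j : ℤ) ^ 2 * f.eval (j : ℤ) ≡
        p * ∑ k ∈ range (p ^ b), ((p ^ b - 1).choose k : ℤ) ^ 2 * g.eval (k : ℤ)
        [ZMOD p ^ (b + 1)] := by
      calc
        _ ≡ ∑ j ∈ range (p ^ (b + 1)), ((p ^ b - 1).choose (j / p) : ℤ) ^ 2 * f.eval (j : ℤ)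
            [ZMOD p ^ (b + 1)] :=
          Int.ModEq.sum fun j _ => (choose_prime_pow_succ_sub_one_sq_modEq hp b j).mul_right _
        _ = ∑ k ∈ range (p ^ b), ∑ r ∈ range p,
            ((p ^ b - 1).choose k : ℤ) ^ 2 * f.eval (p * k + r : ℤ) := by
          rw [pow_succ', sum_range_mul_eq_sum_sum]
          refine sum_congr rfl fun k _ => sum_congr rfl fun r hr => ?_
          rw [Nat.mul_add_div hp.pos, Nat.div_eq_of_lt (mem_range.mp hr), add_zero]
          push_cast
          rfl
        _ = _ := by
          simp only [← mul_sum, hg, mul_left_comm _ (p : ℤ)]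
    rw [hreduce.dvd_iff, pow_succ']
    exact mul_dvd_mul_left _ (ih hgsum)

theorem sum_choose_sq_mul_one_sub_mul_eval_modEq (hp : Odd p) {b : ℕ}
    (hb : b ≠ 0) {f : ℤ[X]} (hf : (p : ℤ) ∣ ∑ r ∈ range p, f.eval (r : ℤ)) :
    ∑ k ∈ range (p ^ b), ((p ^ b - 1).choose k : ℤ) ^ 2 * (1 - p * f.eval (k : ℤ)) ≡ -p ^ b
      [ZMOD p ^ (b + 1)] := by
  have hdvd := mul_dvd_mul_left (p : ℤ) (prime_pow_dvd_sum_choose_sq_mul_eval hp b hf)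
  rw [← pow_succ'] at hdvd
  simp only [mul_sub, mul_one, sum_sub_distrib, mul_left_comm _ (p : ℤ), ← mul_sum]
  simpa only [sub_zero] using
    (sum_choose_prime_pow_sub_one_sq_modEq hp hb).sub (Int.modEq_zero_iff_dvd.mpr hdvd)

theorem choose_prime_pow_succ_sub_one_sq_sub_sq_modEq (hp : Odd p)
    {b k : ℕ} {v : ℤ} (hv : (p * k + 1) * v ≡ 1 [ZMOD p ^ (2 * (b + 1))]) :
    ((p ^ (b + 1) - 1).choose (p * k + 1) : ℤ) ^ 2 - (p ^ (b + 1) - 1).choose (p * k) ^ 2 ≡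
      -2 * p ^ (b + 1) * ((p ^ b - 1).choose k ^ 2 * v) [ZMOD p ^ (2 * (b + 1))] := by
  have hN : ((p ^ (b + 1) - 1 : ℕ) : ℤ) + 1 = p ^ (b + 1) := by
    rw [Nat.cast_pred (pow_pos hp.pos _)]
    simp
  have hratio := choose_succ_sq_modEq (n := p ^ (b + 1) - 1) (k := p * k) (v := v)
  have hdigit := choose_prime_pow_succ_sub_one_sq_modEq hp b (p * k)
  rw [hN] at hratio
  rw [Nat.mul_div_cancel_left _ hp.pos] at hdigit
  rw [mul_comm 2, pow_mul] at hv ⊢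
  push_cast at hratio
  obtain ⟨s, hs⟩ := (hratio hv).dvd
  obtain ⟨t, ht⟩ := hdigit.dvd
  refine Int.modEq_iff_dvd.mpr ⟨s - 2 * v * t, ?_⟩
  linear_combination hs - 2 * (p : ℤ) ^ (b + 1) * v * ht

end PrimePower

theorem sum_neg_one_pow_mul_choose_mul_choose_modEq {b : ℕ} {v : ℕ → ℤ}
    (hv : ∀ k : ℕ, (3 * k + 1) * v k ≡ 1 [ZMOD 3 ^ (2 * (b + 1))]) :
    ∑ k ∈ range (3 ^ (b + 1)),
        (-1) ^ k * ((3 ^ (b + 1) - 1).choose k : ℤ) * ((2 * k).choose k : ℤ) ≡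
      -2 * 3 ^ (b + 1) * ∑ k ∈ range (3 ^ b), ((3 ^ b - 1).choose k : ℤ) ^ 2 * v k
      [ZMOD 3 ^ (2 * (b + 1))] := by
  obtain ⟨m, hm⟩ : ∃ m, 3 ^ b = m + 1 := Nat.exists_eq_succ_of_ne_zero (by positivity)
  have hpow : 3 ^ (b + 1) = 3 * (m + 1) := by rw [pow_succ', hm]
  have htrisect := sum_neg_one_pow_mul_choose_mul_choose_eq_sum_sub m
  rw [show 3 * m + 2 = 3 ^ (b + 1) - 1 by lia, ← hpow, ← hm] at htrisect
  rw [htrisect, mul_sum]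
  exact Int.ModEq.sum fun k _ =>
    choose_prime_pow_succ_sub_one_sq_sub_sq_modEq (p := 3) (by decide) (mod_cast hv k)

/-- Sun's conjecture (iii): for `a ≥ 2`,
`(1/3^a)·∑_{k<3^a} (−1)^k C(3^a−1,k) C(2k,k) ≡ −3^{a−1} (mod 3^a)`,
stated with denominators cleared as `S ≡ −3^{2a−1} (mod 3^{2a})`. -/
theorem stmt_7 (a : ℕ) (ha : 2 ≤ a) :
    (∑ k ∈ Finset.range (3 ^ a),
        (-1) ^ k * (Nat.choose (3 ^ a - 1) k : ℤ) * (Nat.choose (2 * k) k : ℤ)) ≡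
      -3 ^ (2 * a - 1) [ZMOD 3 ^ (2 * a)] := by
  obtain ⟨b, rfl⟩ : ∃ b, a = b + 1 := ⟨a - 1, by lia⟩
  have hodd : Odd 3 := by decide
  obtain ⟨f, hf, hinv⟩ := exists_mul_one_sub_mul_eval_modEq_one hodd (2 * (b + 1))
  have hsum := sum_choose_sq_mul_one_sub_mul_eval_modEq (p := 3) hodd (b := b) (by lia) hf
  push_cast at hinv hsum
  refine (sum_neg_one_pow_mul_choose_mul_choose_modEq
    (v := fun k => 1 - 3 * f.eval (k : ℤ)) fun k => hinv k).trans ?_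
  calc
    _ ≡ -2 * 3 ^ (b + 1) * -3 ^ b [ZMOD 3 ^ (2 * (b + 1))] := by
      rw [two_mul (b + 1), pow_add, mul_assoc, mul_assoc]
      exact hsum.mul_left'.mul_left (-2)
    _ ≡ -3 ^ (2 * (b + 1) - 1) [ZMOD 3 ^ (2 * (b + 1))] := by
      rw [show 2 * (b + 1) - 1 = 2 * b + 1 by lia]
      exact Int.modEq_iff_dvd.mpr ⟨-1, by ring⟩
end

section
/- For every positive integer n, the integer ∑_{k=0}^{n-1} (−1)^k·C(n−1,k)·C(2k,k) is divisible by 3^{2·ν₃(n)−1} (when ν₃(n) ≥ 1; the statement is trivial when ν₃(n) = 0). -/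
/-!
Up to sign the sum is the central trinomial coefficient `[x^(n-1)] (1 + x + x²)^(n-1)`. For
`n = 3N` with `3^a ∣ N`, writing `1 + x + x² = (1 - x³) / (1 - x)` expresses it as a sum of the
coefficients `αᵢ` of `x^(3i+2)` in `(1 - x)^(1-3N)`, weighted by coefficients of `(1 - x)^(3N-1)`.
Differentiating twice gives `(3i+1)(3i+2) αᵢ = 3N(3N-1) βᵢ`, where `βᵢ` is the coefficient of
`x^(3i)` in `(1 - x)^(-3N-1)`. This gains a factor `3^(a+1)`, and it remains to find `3^a` in the
same weighted sum of the `βᵢ / ((3i+1)(3i+2))`. Modulo `3^a`, `βᵢ` is `C(N+i, N)` and the reciprocal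
of `(3i+1)(3i+2)` is, by Euler's theorem, an integer polynomial in `3i`, hence an integer
combination of the functions `3^r i(i-1)⋯(i-r+1)`. For each of these the sum is a multiple of
`3^r c`, where `c` is a single coefficient of `(1 - x)^(2N-2-r)`; here `3^a` divides `(r+1) c`, and
`3^r` makes up for the powers of 3 in `r+1`.
-/

open Finset PowerSeries

section PowerSeriesCoefficients

variable {R : Type*} [CommRing R]

lemma coeff_one_add_X_pow (n k : ℕ) : coeff k ((1 + X : R⟦X⟧) ^ n) = n.choose k := by
  have coe_eq : (((1 + Polynomial.X) ^ n : Polynomial R) : R⟦X⟧) = (1 + X) ^ n := by push_cast; rfl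
  rw [← coe_eq, Polynomial.coeff_coe, Polynomial.coeff_one_add_X_pow]

lemma coeff_one_sub_X_pow (n k : ℕ) :
    coeff k ((1 - X : R⟦X⟧) ^ n) = (-1) ^ k * n.choose k := by
  have rescale_eq : rescale (-1 : R) ((1 + X) ^ n) = (1 - X) ^ n := by
    simp [rescale_X, sub_eq_add_neg]
  rw [← rescale_eq, coeff_rescale, coeff_one_add_X_pow]

lemma coeff_expand_mul_eq_sum_antidiagonal {p s : ℕ} (hp : p ≠ 0) (hs : s < p) (F G : R⟦X⟧)
    (m : ℕ) :
    coeff (p * m + s) (expand p hp F * G) =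
      ∑ ij ∈ antidiagonal m, coeff ij.1 F * coeff (p * ij.2 + s) G := by
  rw [coeff_mul]
  symm
  refine sum_of_injOn (fun ij ↦ (p * ij.1, p * ij.2 + s)) ?_ ?_ ?_ ?_
  · rintro ⟨i, j⟩ - ⟨i', j'⟩ - h
    simpa [hp] using h
  · rintro ⟨i, j⟩ hij
    simp only [mem_coe, HasAntidiagonal.mem_antidiagonal] at hij ⊢
    rw [← hij]
    ring
  · rintro ⟨k, l⟩ hkl hnot
    rw [coeff_expand_of_not_dvd, zero_mul]
    rintro ⟨i, rfl⟩
    rw [HasAntidiagonal.mem_antidiagonal] at hkl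
    have hi : i ≤ m := by
      by_contra! hlt
      nlinarith
    obtain ⟨j, rfl⟩ := Nat.exists_eq_add_of_le hi
    refine hnot ⟨(i, j), by simp, ?_⟩
    ext <;> simp only
    linarith
  · rintro ⟨i, j⟩ -
    simp

lemma coeff_expand_mul_geom_sum_X {p s : ℕ} (hp : p ≠ 0) (hs : s < p) (F : R⟦X⟧) (m : ℕ) :
    coeff (p * m + s) (expand p hp F * ∑ i ∈ range p, X ^ i) = coeff m F := by
  rw [coeff_expand_mul_eq_sum_antidiagonal hp hs, sum_eq_single (m, 0)]
  · simp [coeff_X_pow, hs]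
  · rintro ⟨i, j⟩ hij hne
    rw [HasAntidiagonal.mem_antidiagonal] at hij
    have hj : 1 ≤ j := Nat.one_le_iff_ne_zero.2 fun h ↦ hne <| by ext <;> simp <;> omega
    have hlt : ¬ p * j + s < p := by nlinarith
    simp [coeff_X_pow, hlt]
  · simp

lemma one_sub_X_pow_mul_invOneSubPow (d : ℕ) :
    (1 - X : R⟦X⟧) ^ d * (invOneSubPow R d).val = 1 := by
  rw [← invOneSubPow_inv_eq_one_sub_pow, Units.inv_val]

lemma natCast_dvd_coeff {q : ℕ} {F : R⟦X⟧} (h : (q : R⟦X⟧) ∣ F) (k : ℕ) :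
    (q : R) ∣ coeff k F := by
  obtain ⟨G, rfl⟩ := h
  rw [← nsmul_eq_mul, map_nsmul, nsmul_eq_mul]
  exact dvd_mul_right _ _

lemma prime_dvd_one_sub_X_pow_sub {p : ℕ} (hp : p.Prime) :
    (p : R⟦X⟧) ∣ (1 - X) ^ p - (1 - X ^ p) := by
  obtain ⟨G, hG⟩ := exists_add_pow_prime_eq hp (1 - X : R⟦X⟧) X
  rw [sub_add_cancel, one_pow] at hG
  exact ⟨-((1 - X) * X * G), by linear_combination -hG⟩

lemma prime_pow_dvd_one_sub_X_pow_sub {p a N : ℕ} (hp : p.Prime) (hN : p ^ a ∣ N) :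
    ((p ^ (a + 1) : ℕ) : R⟦X⟧) ∣ (1 - X) ^ (p * N) - (1 - X ^ p) ^ N := by
  obtain ⟨t, rfl⟩ := hN
  push_cast
  rw [pow_mul, pow_mul, pow_mul]
  exact (dvd_sub_pow_of_dvd_sub (prime_dvd_one_sub_X_pow_sub hp) a).trans
    (sub_dvd_pow_sub_pow _ _ t)

end PowerSeriesCoefficients

lemma choose_mul_add_mul_modEq {p a N s : ℕ} (hp : p.Prime) (hN : p ^ a ∣ N)
    (hs : s < p) (i : ℕ) :
    ((p * N + (p * i + s)).choose (p * N) : ℤ) ≡ (N + i).choose N [ZMOD (p ^ (a + 1) : ℕ)] := by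
  set B : ℤ⟦X⟧ := (invOneSubPow ℤ (p * N + 1)).val with hB
  set G : ℤ⟦X⟧ := expand p hp.ne_zero (invOneSubPow ℤ (N + 1)).val with hG
  set g : ℤ⟦X⟧ := ∑ k ∈ range p, X ^ k with hg
  have hB_inv : (1 - X) ^ (p * N + 1) * B = 1 := one_sub_X_pow_mul_invOneSubPow _
  have hG_inv : (1 - X ^ p) ^ (N + 1) * G = 1 := by
    simpa using congrArg (expand p hp.ne_zero) (one_sub_X_pow_mul_invOneSubPow (R := ℤ) (N + 1))
  have hg_mul : g * (1 - X) = 1 - X ^ p := geom_sum_mul_neg X p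
  have hdvd : ((p ^ (a + 1) : ℕ) : ℤ⟦X⟧) ∣ G * g - B := by
    have factor : G * g - B =
        ((1 - X) ^ (p * N) - (1 - X ^ p) ^ N) * (B * G * g * (1 - X)) := by
      linear_combination -(G * g) * hB_inv + B * hG_inv + B * G * (1 - X ^ p) ^ N * hg_mul
    rw [factor]
    exact (prime_pow_dvd_one_sub_X_pow_sub hp hN).mul_right _
  have hcoeffG : coeff (p * i + s) (G * g) = (N + i).choose N := by
    rw [hG, hg, coeff_expand_mul_geom_sum_X hp.ne_zero hs,
      invOneSubPow_val_succ_eq_mk_add_choose, coeff_mk]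
  have hcoeffB : coeff (p * i + s) B = (p * N + (p * i + s)).choose (p * N) := by
    simp [hB, invOneSubPow_val_succ_eq_mk_add_choose]
  rw [Int.modEq_iff_dvd, ← hcoeffG, ← hcoeffB, ← map_sub]
  exact natCast_dvd_coeff hdvd _

lemma choose_mul_ascFactorial_eq_choose_mul_descFactorial (n r l : ℕ) :
    (n + r + l).choose (n + r) * (n + 1).ascFactorial r =
      (n + (r + l)).choose n * (r + l).descFactorial r := by
  have h := Nat.choose_mul (n := n + r + l) (k := n + r) (s := n) (by omega)
  rw [Nat.add_sub_cancel_left, add_assoc n r l, Nat.add_sub_cancel_left] at h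
  rw [Nat.ascFactorial_eq_factorial_mul_choose, Nat.descFactorial_eq_factorial_mul_choose,
    ← Nat.choose_symm_add, add_assoc n r l]
  linear_combination r.factorial * h

section FactorialMoments

variable {R : Type*} [CommRing R]

lemma coeff_X_pow_mul_invOneSubPow_mul_ascFactorial (n r i : ℕ) :
    coeff i ((X : R⟦X⟧) ^ r * (invOneSubPow R (n + r + 1)).val) * (n + 1).ascFactorial r =
      (n + i).choose n * i.descFactorial r := by
  rw [coeff_X_pow_mul', invOneSubPow_val_succ_eq_mk_add_choose]
  split_ifs with hri
  · obtain ⟨l, rfl⟩ := Nat.exists_eq_add_of_le hri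
    rw [Nat.add_sub_cancel_left, coeff_mk]
    exact_mod_cast congrArg (Nat.cast (R := R))
      (choose_mul_ascFactorial_eq_choose_mul_descFactorial n r l)
  · simp [Nat.descFactorial_of_lt (not_le.1 hri)]

lemma sum_coeff_mul_choose_mul_descFactorial (F : R⟦X⟧) (m n r : ℕ) :
    ∑ ij ∈ antidiagonal m, coeff ij.1 F * ((n + ij.2).choose n * ij.2.descFactorial r) =
      coeff m (F * (X ^ r * (invOneSubPow R (n + r + 1)).val)) * (n + 1).ascFactorial r := by
  rw [coeff_mul, sum_mul]
  refine sum_congr rfl fun ij _ ↦ ?_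
  rw [← coeff_X_pow_mul_invOneSubPow_mul_ascFactorial, mul_assoc]

end FactorialMoments

lemma prime_pow_dvd_prime_pow_mul {p a r c : ℕ} (hp : p.Prime) (h : p ^ a ∣ (r + 1) * c) :
    p ^ a ∣ p ^ r * c := by
  obtain ⟨e, m, hm, hr⟩ := Nat.exists_eq_pow_mul_and_not_dvd r.succ_ne_zero p hp.ne_one
  have hcop : Nat.Coprime (p ^ a) m := ((Nat.Prime.coprime_iff_not_dvd hp).2 hm).pow_left a
  have her : e ≤ r := by
    have pow_le : p ^ e ≤ r + 1 := Nat.le_of_dvd r.succ_pos ⟨m, hr⟩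
    have lt_pow : e < p ^ e := Nat.lt_pow_self hp.one_lt
    omega
  rw [← Nat.succ_eq_add_one, hr, mul_comm (p ^ e), mul_assoc] at h
  exact (hcop.dvd_of_dvd_mul_left h).trans (Nat.mul_dvd_mul_right (pow_dvd_pow p her) c)

lemma prime_pow_dvd_prime_pow_mul_choose {p a r l : ℕ} (hp : p.Prime) (h : p ^ a ∣ r + l + 1) :
    p ^ a ∣ p ^ r * (r + 2 * l).choose l := by
  refine prime_pow_dvd_prime_pow_mul hp ?_
  have hmul : (r + 2 * l + 1) * (r + 2 * l).choose l =
      (r + 2 * l + 1).choose (r + l + 1) * (r + l + 1) := by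
    rw [← Nat.add_one_mul_choose_eq, ← Nat.choose_symm_of_eq_add (by omega : _ = l + (r + l))]
  have hdvd : p ^ a ∣ (r + 2 * l + 1) * (r + 2 * l).choose l := hmul ▸ h.mul_left _
  refine (Nat.dvd_add_right hdvd).1 ?_
  rw [← add_mul, show r + 2 * l + 1 + (r + 1) = (r + l + 1) * 2 by ring, mul_assoc]
  exact h.mul_right _

lemma prime_pow_dvd_sum_mul_descFactorial {p a M : ℕ} (hp : p.Prime) (hM : p ^ a ∣ M + 1)
    (r : ℕ) :
    (p : ℤ) ^ a ∣ ∑ ij ∈ antidiagonal M,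
      coeff ij.1 ((1 - X : ℤ⟦X⟧) ^ (3 * M + 2)) * (M + 1 + ij.2).choose (M + 1) *
        ((p : ℤ) ^ r * ij.2.descFactorial r) := by
  have hsum : ∑ ij ∈ antidiagonal M,
      coeff ij.1 ((1 - X : ℤ⟦X⟧) ^ (3 * M + 2)) * (M + 1 + ij.2).choose (M + 1) *
        ((p : ℤ) ^ r * ij.2.descFactorial r) =
      p ^ r * (coeff M ((1 - X) ^ (3 * M + 2) *
        (X ^ r * (invOneSubPow ℤ (M + 1 + r + 1)).val)) * (M + 1 + 1).ascFactorial r) := by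
    rw [← sum_coeff_mul_choose_mul_descFactorial, mul_sum]
    exact sum_congr rfl fun ij _ ↦ by ring
  rw [hsum, mul_left_comm ((1 - X) ^ _), coeff_X_pow_mul']
  split_ifs with hr
  · obtain ⟨l, rfl⟩ := Nat.exists_eq_add_of_le hr
    rw [show 3 * (r + l) + 2 = r + 2 * l + (r + l + 1 + r + 1) by ring,
      one_sub_pow_add_mul_invOneSubPow_val_eq_one_sub_pow, Nat.add_sub_cancel_left,
      coeff_one_sub_X_pow]
    have h : (p : ℤ) ^ a ∣ p ^ r * (r + 2 * l).choose l := by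
      exact_mod_cast prime_pow_dvd_prime_pow_mul_choose hp hM
    exact h.trans ⟨(-1) ^ l * (r + l + 1 + 1).ascFactorial r, by ring⟩
  · simp

lemma mul_descFactorial_eq (k r : ℕ) :
    k * k.descFactorial r = k.descFactorial (r + 1) + r * k.descFactorial r := by
  rw [Nat.descFactorial_succ, ← add_mul]
  rcases le_or_gt r k with h | h
  · rw [Nat.sub_add_cancel h]
  · simp [Nat.descFactorial_of_lt h]

lemma dvd_sum_mul_eval_of_dvd_sum_mul_descFactorial {R ι : Type*} [CommRing R] {s : Finset ι}
    {k : ι → ℕ} {w : ι → R} {b q : R}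
    (h : ∀ r, q ∣ ∑ i ∈ s, w i * (b ^ r * (k i).descFactorial r)) (f : Polynomial R) :
    q ∣ ∑ i ∈ s, w i * f.eval (b * k i) := by
  induction f using Polynomial.induction_on' with
  | add f g hf hg => simpa only [Polynomial.eval_add, mul_add, sum_add_distrib] using dvd_add hf hg
  | monomial n c =>
    suffices hpow : ∀ r, q ∣ ∑ i ∈ s, w i * (b * k i) ^ n * (b ^ r * (k i).descFactorial r) by
      simpa [mul_sum, mul_left_comm] using (hpow 0).mul_left c
    induction n with
    | zero => simpa using h
    | succ n ih =>
      intro r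
      have hsplit : ∑ i ∈ s, w i * (b * k i) ^ (n + 1) * (b ^ r * (k i).descFactorial r) =
          ∑ i ∈ s, w i * (b * k i) ^ n * (b ^ (r + 1) * (k i).descFactorial (r + 1)) +
            b * r * ∑ i ∈ s, w i * (b * k i) ^ n * (b ^ r * (k i).descFactorial r) := by
        rw [mul_sum, ← sum_add_distrib]
        refine sum_congr rfl fun i _ ↦ ?_
        have hk := congrArg (Nat.cast (R := R)) (mul_descFactorial_eq (k i) r)
        push_cast at hk
        linear_combination w i * (b * k i) ^ n * b ^ (r + 1) * hk
      exact hsplit ▸ dvd_add (ih (r + 1)) ((ih r).mul_left _)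

lemma dvd_sum_of_forall_dvd_sum_mul_pow {ι : Type*} {s : Finset ι} {x : ι → ℤ} {u : ι → ℕ}
    {m : ℕ} (hm : 0 < m) (hu : ∀ i ∈ s, (u i).Coprime m)
    (h : ∀ e, (m : ℤ) ∣ ∑ i ∈ s, x i * (u i : ℤ) ^ (e + 1)) : (m : ℤ) ∣ ∑ i ∈ s, x i := by
  obtain ⟨e, he⟩ := Nat.exists_eq_add_one.2 (Nat.totient_pos.2 hm)
  refine (dvd_sub_right (h e)).1 ?_
  rw [← sum_sub_distrib]
  refine dvd_sum fun i hi ↦ ?_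
  have euler : (m : ℤ) ∣ (u i : ℤ) ^ (e + 1) - 1 := by
    have h_modEq := Int.natCast_modEq_iff.2 (Nat.ModEq.pow_totient (hu i hi))
    rw [he] at h_modEq
    exact_mod_cast h_modEq.symm.dvd
  exact euler.trans ⟨x i, by ring⟩

lemma add_one_mul_add_two_mul_choose (k l : ℕ) :
    (l + 1) * (l + 2) * (k + (l + 2)).choose k =
      (k + 1) * (k + 2) * (k + 2 + l).choose (k + 2) := by
  have step_one := Nat.choose_succ_right_eq (k + (l + 2)) k
  have step_two := Nat.choose_succ_right_eq (k + (l + 2)) (k + 1)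
  rw [Nat.add_sub_cancel_left] at step_one
  rw [show k + (l + 2) - (k + 1) = l + 1 by omega] at step_two
  rw [show k + 2 + l = k + (l + 2) by ring]
  calc (l + 1) * (l + 2) * (k + (l + 2)).choose k
      = (l + 1) * ((k + (l + 2)).choose k * (l + 2)) := by ring
    _ = (k + 1) * ((k + (l + 2)).choose (k + 1) * (l + 1)) := by rw [← step_one]; ring
    _ = (k + 1) * (k + 2) * (k + (l + 2)).choose (k + 2) := by rw [← step_two]; ring

/-- The central trinomial coefficient: the coefficient of `X ^ m` in `(1 + X + X ^ 2) ^ m`.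
It is the alternating binomial sum up to sign, taken in `ℤ⟦X⟧` so that `1 + X + X ^ 2` can be
written as a quotient by `1 - X`. -/
noncomputable def centralTrinomial (m : ℕ) : ℤ :=
  coeff m ((1 + X + X ^ 2 : ℤ⟦X⟧) ^ m)

lemma sum_neg_one_pow_mul_choose_mul_choose (m : ℕ) :
    ∑ k ∈ range (m + 1), (-1) ^ k * (m.choose k : ℤ) * ((2 * k).choose k : ℤ) =
      (-1) ^ m * centralTrinomial m := by
  have expansion : (-1) ^ m * (1 + X + X ^ 2 : ℤ⟦X⟧) ^ m =
      ∑ k ∈ range (m + 1),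
        C ((-1) ^ k * (m.choose k : ℤ)) * ((1 + X) ^ (2 * k) * X ^ (m - k)) := by
    rw [← mul_pow, show (-1 * (1 + X + X ^ 2) : ℤ⟦X⟧) = -(1 + X) ^ 2 + X by ring, add_pow]
    refine sum_congr rfl fun k _ ↦ ?_
    rw [neg_pow, ← pow_mul]
    push_cast [map_mul, map_pow]
    simp only [map_neg, map_one, map_natCast]
    ring
  have coeff_m := congrArg (coeff m) expansion
  rw [show (-1 : ℤ⟦X⟧) ^ m = C ((-1) ^ m) by simp, coeff_C_mul, map_sum] at coeff_m
  rw [centralTrinomial, coeff_m]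
  refine sum_congr rfl fun k hk ↦ ?_
  have hkm : k ≤ m := Nat.lt_succ_iff.1 (mem_range.1 hk)
  rw [coeff_C_mul, coeff_mul_X_pow', if_pos (Nat.sub_le m k), Nat.sub_sub_self hkm,
    coeff_one_add_X_pow]

lemma centralTrinomial_three_mul_add_two (M : ℕ) :
    centralTrinomial (3 * M + 2) = ∑ ij ∈ antidiagonal M,
      coeff ij.1 ((1 - X : ℤ⟦X⟧) ^ (3 * M + 2)) *
        (3 * M + 1 + (3 * ij.2 + 2)).choose (3 * M + 1) := by
  have factor : (1 + X + X ^ 2 : ℤ⟦X⟧) ^ (3 * M + 2) =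
      expand 3 three_ne_zero ((1 - X) ^ (3 * M + 2)) * (invOneSubPow ℤ (3 * M + 2)).val := by
    have h := one_sub_X_pow_mul_invOneSubPow (R := ℤ) (3 * M + 2)
    rw [map_pow, map_sub, map_one, expand_X,
      show (1 - X ^ 3 : ℤ⟦X⟧) = (1 + X + X ^ 2) * (1 - X) by ring, mul_pow, mul_assoc, h, mul_one]
  rw [centralTrinomial, factor, coeff_expand_mul_eq_sum_antidiagonal _ (by norm_num)]
  simp [invOneSubPow_val_succ_eq_mk_add_choose]

lemma three_pow_dvd_sum_choose_mul_pow {M a : ℕ} (hM : 3 ^ a ∣ M + 1) (e : ℕ) :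
    (3 : ℤ) ^ a ∣ ∑ ij ∈ antidiagonal M,
      coeff ij.1 ((1 - X : ℤ⟦X⟧) ^ (3 * M + 2)) *
        (3 * (M + 1) + 3 * ij.2).choose (3 * (M + 1)) *
        ((3 * ij.2 + 1) * (3 * ij.2 + 2) : ℤ) ^ e := by
  have reduced := dvd_sum_mul_eval_of_dvd_sum_mul_descFactorial
    (prime_pow_dvd_sum_mul_descFactorial Nat.prime_three hM)
    (((Polynomial.X + 1) * (Polynomial.X + 2)) ^ e)
  push_cast at reduced
  refine (dvd_sub_left reduced).1 ?_
  rw [← sum_sub_distrib]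
  refine dvd_sum fun ij _ ↦ ?_
  have hchoose := (choose_mul_add_mul_modEq Nat.prime_three hM three_pos ij.2).symm.dvd
  push_cast at hchoose
  refine ((pow_dvd_pow 3 a.le_succ).trans hchoose).trans
    ⟨coeff ij.1 ((1 - X : ℤ⟦X⟧) ^ (3 * M + 2)) * ((3 * ij.2 + 1) * (3 * ij.2 + 2)) ^ e, ?_⟩
  simp only [Polynomial.eval_pow, Polynomial.eval_mul, Polynomial.eval_add, Polynomial.eval_X,
    Polynomial.eval_one, Polynomial.eval_ofNat]
  ring_nf

lemma sum_coeff_mul_choose_mul_pow_succ (M e : ℕ) :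
    ∑ ij ∈ antidiagonal M,
      coeff ij.1 ((1 - X : ℤ⟦X⟧) ^ (3 * M + 2)) *
        (3 * M + 1 + (3 * ij.2 + 2)).choose (3 * M + 1) *
        ((3 * ij.2 + 1) * (3 * ij.2 + 2) : ℤ) ^ (e + 1) =
      (3 * M + 2) * (3 * (M + 1)) * ∑ ij ∈ antidiagonal M,
        coeff ij.1 ((1 - X : ℤ⟦X⟧) ^ (3 * M + 2)) *
          (3 * (M + 1) + 3 * ij.2).choose (3 * (M + 1)) *
          ((3 * ij.2 + 1) * (3 * ij.2 + 2) : ℤ) ^ e := by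
  rw [mul_sum]
  refine sum_congr rfl fun ij _ ↦ ?_
  have h := congrArg (Nat.cast (R := ℤ)) (add_one_mul_add_two_mul_choose (3 * M + 1) (3 * ij.2))
  rw [show 3 * M + 1 + 2 = 3 * (M + 1) by ring] at h
  push_cast at h ⊢
  linear_combination coeff ij.1 ((1 - X : ℤ⟦X⟧) ^ (3 * M + 2)) *
    ((3 * ij.2 + 1) * (3 * ij.2 + 2)) ^ e * h

lemma three_pow_dvd_centralTrinomial {M a : ℕ} (hM : 3 ^ a ∣ M + 1) :
    (3 : ℤ) ^ (2 * a + 1) ∣ centralTrinomial (3 * M + 2) := by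
  rw [centralTrinomial_three_mul_add_two]
  have coprime (i : ℕ) : Nat.Coprime ((3 * i + 1) * (3 * i + 2)) (3 ^ (2 * a + 1)) := by
    refine ((Nat.Prime.coprime_iff_not_dvd Nat.prime_three).2 ?_).symm.pow_right _
    rw [Nat.prime_three.dvd_mul]
    omega
  suffices h : ∀ e, ((3 ^ (2 * a + 1) : ℕ) : ℤ) ∣ ∑ ij ∈ antidiagonal M,
      coeff ij.1 ((1 - X : ℤ⟦X⟧) ^ (3 * M + 2)) *
        (3 * M + 1 + (3 * ij.2 + 2)).choose (3 * M + 1) *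
        ((3 * ij.2 + 1) * (3 * ij.2 + 2) : ℤ) ^ (e + 1) by
    exact_mod_cast dvd_sum_of_forall_dvd_sum_mul_pow (by positivity) (fun ij _ ↦ coprime ij.2) h
  intro e
  rw [sum_coeff_mul_choose_mul_pow_succ]
  push_cast [show 3 ^ (2 * a + 1) = 3 * 3 ^ a * 3 ^ a by ring]
  exact mul_dvd_mul ((mul_dvd_mul_left 3 (by exact_mod_cast hM)).mul_left _)
    (by exact_mod_cast three_pow_dvd_sum_choose_mul_pow hM e)

theorem stmt_8 (n : ℕ) (hn : 0 < n) :
    (3 : ℤ) ^ (2 * padicValNat 3 n - 1) ∣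
      ∑ k ∈ Finset.range n,
        (-1) ^ k * (Nat.choose (n - 1) k : ℤ) * (Nat.choose (2 * k) k : ℤ) := by
  by_cases three_dvd : 3 ∣ n
  · obtain ⟨N, rfl⟩ := three_dvd
    obtain ⟨M, rfl⟩ := Nat.exists_eq_add_one.2 (Nat.pos_of_mul_pos_left hn)
    have hval : padicValNat 3 (3 * (M + 1)) = padicValNat 3 (M + 1) + 1 := by
      rw [padicValNat.mul three_ne_zero M.succ_ne_zero, padicValNat_self, add_comm]
    rw [show 3 * (M + 1) = 3 * M + 2 + 1 by ring] at hval ⊢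
    rw [Nat.add_sub_cancel, sum_neg_one_pow_mul_choose_mul_choose, hval]
    exact (three_pow_dvd_centralTrinomial pow_padicValNat_dvd).mul_left _
  · simp [padicValNat.eq_zero_of_not_dvd three_dvd]
end
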